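/- arXiv:math/0609634 — 4 statements merged into one kernel-verified Lean document; each statement's English description precedes it below -/
import Mathlib

section
/- Let x = (S, Λ, a) be an abelian-group k-parameter and let U be a set of functions from ℕ to S of cardinality at most ℵ_k. Then the subgroup G_U of G_x is a free abelian group. -/
open Cardinal

namespace Sh883

/-- A "restricted tuple": the result of replacing the `m`-th coordinate of a `(k+1)`-tuple
of functions `ℕ → S` by a finite sequence (list) of elements of `S`, keeping the other
coordinates. -/
structure Res (k : ℕ) (S : Type u) where
  m : Fin (k + 1)
  seq : List S
  rest : (l : Fin (k + 1)) → l ≠ m → ℕ → S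

/-- `η̄↾⟨m,n⟩` : replace the `m`-th coordinate of `η̄` by the finite sequence
`⟨η_m(0), …, η_m(n-1)⟩`. -/
def restrictAt {k : ℕ} {S : Type u} (η : Fin (k + 1) → ℕ → S) (m : Fin (k + 1)) (n : ℕ) :
    Res k S :=
  ⟨m, List.ofFn fun i : Fin n => η m i, fun l _ => η l⟩

/-- `Λ_m = {η̄↾⟨m,n⟩ : η̄ ∈ Λ, n ∈ ℕ}`. -/
def LambdaResAt {k : ℕ} {S : Type u} (Λ : Set (Fin (k + 1) → ℕ → S)) (m : Fin (k + 1)) :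
    Set (Res k S) :=
  {ν | ∃ η ∈ Λ, ∃ n : ℕ, ν = restrictAt η m n}

/-- `Λ_0 ∪ … ∪ Λ_k`. -/
def LambdaRes {k : ℕ} {S : Type u} (Λ : Set (Fin (k + 1) → ℕ → S)) : Set (Res k S) :=
  ⋃ m, LambdaResAt Λ m

/-- The generators of the group `G_x`: `x_ν` for `ν ∈ Λ_0 ∪ … ∪ Λ_k`, `y_{η̄,n}` for
`η̄ ∈ Λ`, `n ∈ ℕ`, and `z`. -/
inductive Gen (k : ℕ) (S : Type u) (Λ : Set (Fin (k + 1) → ℕ → S)) : Type u where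
  | X : ↥(LambdaRes Λ) → Gen k S Λ
  | Y : ↥Λ → ℕ → Gen k S Λ
  | Z : Gen k S Λ

/-- `η̄↾⟨m,n⟩` as an element of `Λ_0 ∪ … ∪ Λ_k`, for `η̄ ∈ Λ`. -/
def resMem {k : ℕ} {S : Type u} {Λ : Set (Fin (k + 1) → ℕ → S)} (η : ↥Λ) (m : Fin (k + 1))
    (n : ℕ) : ↥(LambdaRes Λ) :=
  ⟨restrictAt (η : Fin (k + 1) → ℕ → S) m n, Set.mem_iUnion.2 ⟨m, (η : _), η.2, n, rfl⟩⟩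

/-- The relation element `n!·y_{η̄,n+1} − y_{η̄,n} − a(η̄,n)·z − Σ_{m≤k} x_{η̄↾⟨m,n⟩}`. -/
def relEl {k : ℕ} {S : Type u} {Λ : Set (Fin (k + 1) → ℕ → S)} (a : ↥Λ → ℕ → ℤ)
    (η : ↥Λ) (n : ℕ) : FreeAbelianGroup (Gen k S Λ) :=
  (n.factorial : ℤ) • FreeAbelianGroup.of (Gen.Y η (n + 1))
    - FreeAbelianGroup.of (Gen.Y η n)
    - a η n • FreeAbelianGroup.of Gen.Z
    - ∑ m : Fin (k + 1), FreeAbelianGroup.of (Gen.X (resMem η m n))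

/-- The subgroup of relations. -/
def relSub {k : ℕ} {S : Type u} {Λ : Set (Fin (k + 1) → ℕ → S)} (a : ↥Λ → ℕ → ℤ) :
    AddSubgroup (FreeAbelianGroup (Gen k S Λ)) :=
  AddSubgroup.closure {g | ∃ (η : ↥Λ) (n : ℕ), g = relEl a η n}

/-- The group `G_x` of the abelian-group `k`-parameter `x = (S, Λ, a)`. -/
abbrev Gx {k : ℕ} {S : Type u} {Λ : Set (Fin (k + 1) → ℕ → S)} (a : ↥Λ → ℕ → ℤ) : Type u :=
  FreeAbelianGroup (Gen k S Λ) ⧸ relSub a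


/-- The image of the generator `x_ν` in `G_x`. -/
def xg {k : ℕ} {S : Type u} {Λ : Set (Fin (k + 1) → ℕ → S)} (a : ↥Λ → ℕ → ℤ)
    (ν : ↥(LambdaRes Λ)) : Gx a :=
  QuotientAddGroup.mk (FreeAbelianGroup.of (Gen.X ν))

/-- The image of the generator `y_{η̄,n}` in `G_x`. -/
def yg {k : ℕ} {S : Type u} {Λ : Set (Fin (k + 1) → ℕ → S)} (a : ↥Λ → ℕ → ℤ)
    (η : ↥Λ) (n : ℕ) : Gx a :=
  QuotientAddGroup.mk (FreeAbelianGroup.of (Gen.Y η n))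

/-- The image of the distinguished generator `z` in `G_x`. -/
def zg {k : ℕ} {S : Type u} {Λ : Set (Fin (k + 1) → ℕ → S)} (a : ↥Λ → ℕ → ℤ) : Gx a :=
  QuotientAddGroup.mk (FreeAbelianGroup.of Gen.Z)

/-- The subgroup `G_U` of `G_x`, for a set `U` of functions `ℕ → S`: generated by `z`,
the `y_{η̄,n}` for `η̄ ∈ Λ` with all coordinates in `U`, and the `x_{η̄↾⟨m,n⟩}` for
`η̄` a `(k+1)`-tuple of members of `U` with `η̄↾⟨m,n⟩ ∈ Λ_m`. -/
def GU {k : ℕ} {S : Type u} {Λ : Set (Fin (k + 1) → ℕ → S)} (a : ↥Λ → ℕ → ℤ)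
    (U : Set (ℕ → S)) : AddSubgroup (Gx a) :=
  AddSubgroup.closure
    ({zg a}
      ∪ {g | ∃ (η : ↥Λ) (n : ℕ),
          (∀ l : Fin (k + 1), (η : Fin (k + 1) → ℕ → S) l ∈ U) ∧ g = yg a η n}
      ∪ {g | ∃ (η : Fin (k + 1) → ℕ → S) (m : Fin (k + 1)) (n : ℕ) (ν : ↥(LambdaRes Λ)),
          (∀ l : Fin (k + 1), η l ∈ U) ∧ (ν : Res k S) = restrictAt η m n ∧ g = xg a ν})

/-- The subgroup `G_{U,u}` of `G_x`: generated by the union of the subgroups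
`G_{U ∪ (u ∖ {η})}` for `η ∈ u`. -/
def GUu {k : ℕ} {S : Type u} {Λ : Set (Fin (k + 1) → ℕ → S)} (a : ↥Λ → ℕ → ℤ)
    (U u : Set (ℕ → S)) : AddSubgroup (Gx a) :=
  ⨆ η ∈ u, GU a (U ∪ (u \ {η}))

theorem exists_rank {X : Type u} {k : ℕ} (A : Set X) (hA : #A ≤ ℵ_ ((k + 1 : ℕ) : Ordinal)) :
    ∃ g : X → Ordinal.{u}, Set.InjOn g A ∧ ∀ c ∈ A, #{x | x ∈ A ∧ g x ≤ g c} ≤ ℵ_ (k : Ordinal) := by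
  classical
  obtain ⟨r, hr, hord⟩ := Cardinal.exists_ord_eq A
  refine ⟨fun x => if h : x ∈ A then Ordinal.typein r ⟨x, h⟩ else 0, ?_, ?_⟩
  · intro x hx y hy h
    simp only [hx, hy, dif_pos] at h
    have := (Ordinal.typein_inj r).1 h
    simpa using this
  · intro c hc
    have h1 : (Ordinal.typein r ⟨c, hc⟩).card < #A := Cardinal.card_typein_lt _ hord
    have h2 : (Ordinal.typein r ⟨c, hc⟩).card ≤ ℵ_ (k : Ordinal) := by
      have := h1.trans_le hA
      rw [Nat.cast_add, Nat.cast_one, ← Cardinal.succ_aleph] at this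
      exact Order.lt_succ_iff.1 this
    have h3 : #{y : A // r y ⟨c, hc⟩} ≤ ℵ_ (k : Ordinal) := by
      have h4 : (Ordinal.typein r ⟨c, hc⟩).card = #{y : A // r y ⟨c, hc⟩} := rfl
      rwa [h4] at h2
    have h5 : ({x | x ∈ A ∧ (if h : x ∈ A then Ordinal.typein r ⟨x, h⟩ else 0) ≤
        (if h : c ∈ A then Ordinal.typein r ⟨c, h⟩ else 0)} : Set X) ⊆
        insert c (Set.range fun y : {y : A // r y ⟨c, hc⟩} => (y.1 : X)) := by
      rintro x ⟨hx, hxc⟩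
      simp only [hx, hc, dif_pos] at hxc
      rcases hxc.lt_or_eq with h | h
      · right
        exact ⟨⟨⟨x, hx⟩, (Ordinal.typein_lt_typein r).1 h⟩, rfl⟩
      · left
        have := (Ordinal.typein_inj r).1 h
        simpa using this
    refine (Cardinal.mk_le_mk_of_subset h5).trans ?_
    refine Cardinal.mk_insert_le.trans ?_
    refine Cardinal.add_le_of_le (Cardinal.aleph0_le_aleph _) (Cardinal.mk_range_le.trans h3) ?_
    exact (Cardinal.one_lt_aleph0.le).trans (Cardinal.aleph0_le_aleph _)

theorem exists_first_max {n : ℕ} (v : Fin (n + 1) → Ordinal.{u}) :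
    ∃ i, (∀ l, v l ≤ v i) ∧ ∀ j, j < i → v j < v i := by
  obtain ⟨i0, hi0⟩ := Finite.exists_max v
  obtain ⟨i, hi, hmin⟩ := (wellFounded_lt (α := Fin (n + 1))).has_min {i | ∀ l, v l ≤ v i} ⟨i0, hi0⟩
  refine ⟨i, hi, fun j hj => lt_of_le_of_ne (hi j) fun h => ?_⟩
  exact hmin j (fun l => h ▸ hi l) hj

theorem to_ord {α : Type u} {W : Type v} [LT W] [WellFoundedLT W] (f : α → W) :
    ∃ f' : α → Ordinal.{u}, ∀ x y, f x < f y → f' x < f' y := by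
  refine ⟨IsWellFounded.rank (Function.onFun (fun a b : W => a < b) f), fun x y h => ?_⟩
  exact IsWellFounded.rank_lt_of_rel h

theorem comb {X : Type u} (k : ℕ) : ∀ A : Set X, #A ≤ ℵ_ (k : Ordinal) →
    ∃ f : (Fin (k + 1) → X) → Ordinal.{u}, Set.InjOn f {η | ∀ l, η l ∈ A} ∧
      ∀ η, (∀ l, η l ∈ A) → ∃ m, {ν | (∀ l, ν l ∈ A) ∧ f ν < f η ∧ ∀ l, l ≠ m → ν l = η l}.Finite := by
  classical
  induction k with
  | zero =>
    intro A hA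
    have hc : A.Countable := by
      rw [← Cardinal.le_aleph0_iff_set_countable]
      simpa using hA
    obtain ⟨g, hg⟩ := Set.countable_iff_exists_injOn.1 hc
    have hinj : Set.InjOn (fun η : Fin 1 → X => g (η 0)) {η | ∀ l, η l ∈ A} := by
      intro x hx y hy h
      have := hg (hx 0) (hy 0) h
      funext l
      rw [Subsingleton.elim l 0, this]
    refine ⟨fun η => ((g (η 0) : ℕ) : Ordinal), ?_, ?_⟩
    · intro x hx y hy h
      exact hinj hx hy (by simpa using h)
    · intro η hη
      refine ⟨0, ?_⟩
      refine Set.Finite.of_finite_image (f := fun η : Fin 1 → X => g (η 0)) ?_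
        (hinj.mono fun ν hν => hν.1)
      refine (Set.finite_Iio (g (η 0))).subset ?_
      rintro _ ⟨ν, hν, rfl⟩
      have := hν.2.1
      simpa using this
  | succ k ih =>
    intro A hA
    obtain ⟨g, hg, hgc⟩ := exists_rank A hA
    have ih' := fun c : A => ih {x | x ∈ A ∧ g x ≤ g c} (hgc c c.2)
    choose F hF1 hF2 using ih'
    choose i hi1 hi2 using fun η : Fin (k + 2) → X => exists_first_max (fun l => g (η l))
    let T : (Fin (k + 2) → X) → Ordinal.{u} ×ₗ (Fin (k + 2) ×ₗ Ordinal.{u}) := fun η =>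
      toLex (g (η (i η)), toLex (i η,
        if h : η (i η) ∈ A then F ⟨_, h⟩ ((i η).removeNth η) else 0))
    have hin : ∀ η, (∀ l, η l ∈ A) → ∀ l, (i η).removeNth η l ∈ {x | x ∈ A ∧ g x ≤ g (η (i η))} := by
      intro η hη l
      exact ⟨hη _, hi1 η _⟩
    have key : ∀ η ν, (∀ l, η l ∈ A) → (∀ l, ν l ∈ A) → η (i η) = ν (i ν) → i η = i ν →
        ∀ c : A, c = η (i η) → (T ν).2.2 = F c ((i η).removeNth ν) := by
      intro η ν hη hν h1 h2 c hc
      have hc' : c = ⟨ν (i ν), hν _⟩ := by ext; rw [hc, h1]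
      simp only [T, hν, dif_pos, hc', h2]
      rfl
    have hT : Set.InjOn T {η | ∀ l, η l ∈ A} := by
      intro η hη ν hν h
      have e1 : η (i η) = ν (i ν) := hg (hη _) (hν _) (congrArg (fun t => t.1) h)
      have e2 : i η = i ν := congrArg (fun t => t.2.1) h
      have e3 : (T η).2.2 = (T ν).2.2 := congrArg (fun t => t.2.2) h
      rw [key η η hη hη rfl rfl ⟨η (i η), hη _⟩ rfl, key η ν hη hν e1 e2 ⟨η (i η), hη _⟩ rfl] at e3
      have e4 := hF1 ⟨η (i η), hη _⟩ (hin η hη) (by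
        intro l
        have := hin ν hν l
        rw [← e1, ← e2] at this
        exact this) e3
      rw [← Fin.insertNth_self_removeNth (i η) η, ← Fin.insertNth_self_removeNth (i η) ν, e4, e1, e2]
    obtain ⟨f, hf⟩ := to_ord T
    have hfT : ∀ η ν, (∀ l, η l ∈ A) → (∀ l, ν l ∈ A) → f ν < f η → T ν < T η := by
      intro η ν hη hν h
      rcases lt_trichotomy (T ν) (T η) with h' | h' | h'
      · exact h'
      · rw [hT hν hη h'] at h
        exact absurd h (lt_irrefl _)
      · exact absurd h (hf _ _ h').asymm
    refine ⟨f, ?_, ?_⟩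
    · intro η hη ν hν h
      rcases lt_trichotomy (T η) (T ν) with h' | h' | h'
      · exact absurd h (hf _ _ h').ne
      · exact hT hη hν h'
      · exact absurd h (hf _ _ h').ne'
    · intro η hη
      obtain ⟨m', hm'⟩ := hF2 ⟨η (i η), hη _⟩ ((i η).removeNth η) (hin η hη)
      refine ⟨(i η).succAbove m', ?_⟩
      refine ((hm'.image fun ν' => (i η).insertNth (α := fun _ => X) (η (i η)) ν').insert
        (Function.update η ((i η).succAbove m') (η (i η)))).subset ?_
      rintro ν ⟨hν, hlt, hag⟩
      have hlt := hfT η ν hη hν hlt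
      have hνi : ν (i η) = η (i η) := hag _ (Fin.succAbove_ne _ _).symm
      rw [Prod.Lex.lt_iff] at hlt
      have e0 : g (η (i η)) ≤ g (ν (i ν)) := hνi ▸ hi1 ν (i η)
      rcases hlt with hlt | ⟨h1, hlt⟩
      · exact absurd hlt (not_lt.2 e0)
      have e1 : ν (i ν) = η (i η) := hg (hν _) (hη _) h1
      rw [Prod.Lex.lt_iff] at hlt
      rcases hlt with hlt | ⟨h2, hlt⟩
      · left
        have hlt : i ν < i η := hlt
        have hj : i ν = (i η).succAbove m' := by
          by_contra hne
          have := hag _ hne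
          have h3 := hi2 η _ hlt
          rw [← this, e1] at h3
          exact lt_irrefl _ h3
        funext l
        by_cases hl : l = (i η).succAbove m'
        · subst hl
          rw [Function.update_self, ← hj, e1]
        · rw [Function.update_of_ne hl, hag l hl]
      · right
        have h2 : i ν = i η := h2
        have hlt : (T ν).2.2 < (T η).2.2 := hlt
        rw [key η η hη hη rfl rfl ⟨η (i η), hη _⟩ rfl,
          key η ν hη hν e1.symm h2.symm ⟨η (i η), hη _⟩ rfl] at hlt
        refine ⟨(i η).removeNth ν, ⟨?_, hlt, ?_⟩, ?_⟩
        · intro l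
          have := hin ν hν l
          rw [e1, h2] at this
          exact this
        · intro l hl
          exact hag _ (fun h => hl (Fin.succAbove_right_injective h))
        · rw [← hνi]
          exact Fin.insertNth_self_removeNth (i η) ν

theorem restrictAt_inj {k : ℕ} {S : Type u} {η ν : Fin (k + 1) → ℕ → S} {m m' : Fin (k + 1)} {n n' : ℕ}
    (h : restrictAt η m n = restrictAt ν m' n') : m = m' ∧ n = n' := by
  have h1 := congrArg Res.m h
  have h2 := congrArg (fun t => (Res.seq t).length) h
  simp only [restrictAt, List.length_ofFn] at h1 h2
  exact ⟨h1, h2⟩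

theorem restrictAt_eq {k : ℕ} {S : Type u} {η ν : Fin (k + 1) → ℕ → S} {m : Fin (k + 1)} {n : ℕ}
    (h : restrictAt η m n = restrictAt ν m n) :
    (∀ l, l ≠ m → η l = ν l) ∧ ∀ j < n, η m j = ν m j := by
  simp only [restrictAt, Res.mk.injEq, heq_eq_eq, true_and] at h
  obtain ⟨h1, h2⟩ := h
  refine ⟨fun l hl => ?_, fun j hj => ?_⟩
  · exact congrFun (congrFun h2 l) hl
  · have := congrFun (List.ofFn_injective h1) ⟨j, hj⟩
    exact this

theorem exists_M {k : ℕ} {S : Type u} (U : Set (ℕ → S)) (hU : #U ≤ Cardinal.aleph k) :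
    ∃ (f : (Fin (k + 1) → ℕ → S) → Ordinal.{u}) (M : (Fin (k + 1) → ℕ → S) → Fin (k + 1))
      (N : (Fin (k + 1) → ℕ → S) → ℕ), Set.InjOn f {η | ∀ l, η l ∈ U} ∧
      ∀ η ν, (∀ l, η l ∈ U) → (∀ l, ν l ∈ U) → f ν < f η → ∀ n, N η ≤ n →
        restrictAt ν (M η) n ≠ restrictAt η (M η) n := by
  obtain ⟨f, hf, hfin⟩ := comb k U hU
  have : ∀ η : Fin (k + 1) → ℕ → S, ∃ (M : Fin (k + 1)) (N : ℕ), ∀ ν, (∀ l, η l ∈ U) →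
      (∀ l, ν l ∈ U) → f ν < f η → ∀ n, N ≤ n → restrictAt ν M n ≠ restrictAt η M n := by
    intro η
    by_cases hη : ∀ l, η l ∈ U
    · obtain ⟨m, hm⟩ := hfin η hη
      have h1 : ∀ ν : Fin (k + 1) → ℕ → S, ∃ j, ν m ≠ η m → ν m j ≠ η m j := by
        intro ν
        by_cases h : ν m = η m
        · exact ⟨0, fun h' => absurd h h'⟩
        · obtain ⟨j, hj⟩ := Function.ne_iff.1 h
          exact ⟨j, fun _ => hj⟩
      choose d hd using h1
      obtain ⟨N, hN⟩ := (hm.image d).bddAbove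
      refine ⟨m, N + 1, fun ν _ hν hlt n hn heq => ?_⟩
      obtain ⟨e1, e2⟩ := restrictAt_eq heq
      have hle : d ν ≤ N := hN ⟨ν, ⟨hν, hlt, e1⟩, rfl⟩
      have hne : ν m ≠ η m := by
        intro h
        have : ν = η := by
          funext l
          by_cases hl : l = m
          · rw [hl, h]
          · exact e1 l hl
        rw [this] at hlt
        exact lt_irrefl _ hlt
      exact hd ν hne (e2 _ (by omega))
    · exact ⟨0, 0, fun ν h => absurd h hη⟩
  choose M N hMN using this
  exact ⟨f, M, N, hf, hMN⟩

theorem exists_down {V : Type u} [AddCommGroup V] (e c : ℕ → V) (N : ℕ) :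
    ∃ y : ℕ → V, (∀ n, N ≤ n → y n = e n) ∧
      ∀ n < N, (n.factorial : ℤ) • y (n + 1) = y n + c n := by
  induction N generalizing e with
  | zero => exact ⟨e, fun _ _ => rfl, fun n hn => absurd hn (Nat.not_lt_zero n)⟩
  | succ N ih =>
    obtain ⟨y, h1, h2⟩ := ih (Function.update e N ((N.factorial : ℤ) • e (N + 1) - c N))
    refine ⟨y, fun n hn => ?_, fun n hn => ?_⟩
    · rw [h1 n (by omega), Function.update_of_ne (by omega)]
    · rcases Nat.lt_succ_iff_lt_or_eq.1 hn with h | rfl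
      · exact h2 n h
      · rw [h1 n le_rfl, h1 (n + 1) (by omega), Function.update_self,
          Function.update_of_ne (by omega)]
        abel

theorem exists_up {V : Type u} [AddCommGroup V] [Module ℚ V] (c : ℕ → V) :
    ∃ y : ℕ → V, ∀ n, (n.factorial : ℤ) • y (n + 1) = y n + c n := by
  refine ⟨fun n => Nat.rec 0 (fun n y => ((n.factorial : ℚ)⁻¹) • (y + c n)) n, fun n => ?_⟩
  simp only
  rw [← Int.cast_smul_eq_zsmul ℚ, smul_smul]
  have : ((n.factorial : ℤ) : ℚ) * (n.factorial : ℚ)⁻¹ = 1 := by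
    push_cast
    exact mul_inv_cancel₀ (by exact_mod_cast n.factorial_ne_zero)
  rw [this, one_smul]

section core
variable {k : ℕ} {S : Type u} {Λ : Set (Fin (k + 1) → ℕ → S)}

def Used (U : Set (ℕ → S)) (M : (Fin (k + 1) → ℕ → S) → Fin (k + 1))
    (N : (Fin (k + 1) → ℕ → S) → ℕ) (ν : ↥(LambdaRes Λ)) (η : ↥Λ) (n : ℕ) : Prop :=
  (∀ l, η.1 l ∈ U) ∧ N η.1 ≤ n ∧ ν = resMem η (M η.1) n

theorem exists_xval {V : Type u} [AddCommGroup V] (U : Set (ℕ → S))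
    (f : (Fin (k + 1) → ℕ → S) → Ordinal.{u}) (M : (Fin (k + 1) → ℕ → S) → Fin (k + 1))
    (N : (Fin (k + 1) → ℕ → S) → ℕ)
    (huniq : ∀ (ν : ↥(LambdaRes Λ)) η n η' n', Used U M N ν η n → Used U M N ν η' n' → η = η' ∧ n = n')
    (hdec : ∀ (ν ν' : ↥(LambdaRes Λ)) η n η' n' m', Used U M N ν η n → Used U M N ν' η' n' →
      ν' = resMem η m' n → m' ≠ M η.1 → f η'.1 < f η.1)
    (e : ↥(LambdaRes Λ) → V) (c : ↥Λ → ℕ → V) :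
    ∃ x : ↥(LambdaRes Λ) → V, (∀ ν, (¬ ∃ η n, Used U M N ν η n) → x ν = e ν) ∧
      ∀ ν η n, Used U M N ν η n → ∑ m, x (resMem η m n) = c η n := by
  classical
  let R : ↥(LambdaRes Λ) → ↥(LambdaRes Λ) → Prop := fun ν' ν =>
    ∃ η n m', Used U M N ν η n ∧ m' ≠ M η.1 ∧ ν' = resMem η m' n
  have hacc0 : ∀ ν, (¬ ∃ η n, Used U M N ν η n) → Acc R ν := by
    intro ν hν
    refine ⟨_, ?_⟩
    rintro ν' ⟨η, n, m', h, -⟩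
    exact absurd ⟨η, n, h⟩ hν
  have hacc1 : ∀ o : Ordinal.{u}, ∀ ν η n, Used U M N ν η n → f η.1 = o → Acc R ν := by
    intro o
    induction o using WellFoundedLT.induction with
    | ind o ih =>
      intro ν η n hu ho
      refine ⟨_, ?_⟩
      rintro ν' ⟨η1, n1, m', h, hm, hν'⟩
      obtain ⟨rfl, rfl⟩ := huniq _ _ _ _ _ hu h
      by_cases hex : ∃ η n, Used U M N ν' η n
      · obtain ⟨η', n', hu'⟩ := hex
        exact ih (f η'.1) (ho ▸ hdec _ _ _ _ _ _ _ hu hu' hν' hm) ν' η' n' hu' rfl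
      · exact hacc0 _ hex
  have wf : WellFounded R := by
    refine ⟨fun ν => ?_⟩
    by_cases hex : ∃ η n, Used U M N ν η n
    · obtain ⟨η', n', hu'⟩ := hex
      exact hacc1 _ _ _ _ hu' rfl
    · exact hacc0 _ hex
  let step : (ν : ↥(LambdaRes Λ)) → ((ν' : ↥(LambdaRes Λ)) → R ν' ν → V) → V := fun ν rec =>
    if h : ∃ p : ↥Λ × ℕ, Used U M N ν p.1 p.2 then
      c h.choose.1 h.choose.2 - ∑ m', if hm : m' ≠ M h.choose.1.1 then
        rec (resMem h.choose.1 m' h.choose.2) ⟨_, _, m', h.choose_spec, hm, rfl⟩ else 0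
    else e ν
  refine ⟨wf.fix step, fun ν hν => ?_, fun ν η n hu => ?_⟩
  · rw [wf.fix_eq]
    have : ¬ ∃ p : ↥Λ × ℕ, Used U M N ν p.1 p.2 := fun ⟨p, hp⟩ => hν ⟨_, _, hp⟩
    simp only [step, dif_neg this]
  · have h : ∃ p : ↥Λ × ℕ, Used U M N ν p.1 p.2 := ⟨(η, n), hu⟩
    have h1 : wf.fix step ν = c η n - ∑ m', if m' ≠ M η.1 then
        wf.fix step (resMem η m' n) else 0 := by
      rw [wf.fix_eq]
      simp only [step]
      rw [dif_pos h]
      obtain ⟨h1, h2⟩ := huniq _ _ _ _ _ hu h.choose_spec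
      rw [← h1, ← h2]
      simp only [dite_eq_ite]
    have h2 : ∑ m, wf.fix step (resMem η m n) = wf.fix step (resMem η (M η.1) n) +
        ∑ m', if m' ≠ M η.1 then wf.fix step (resMem η m' n) else 0 := by
      rw [← Finset.add_sum_erase _ _ (Finset.mem_univ (M η.1)), ← Finset.sum_filter]
      congr 2
      ext; simp
    rw [h2, ← hu.2.2, h1]
    abel

theorem core (a : ↥Λ → ℕ → ℤ) (U : Set (ℕ → S))
    (f : (Fin (k + 1) → ℕ → S) → Ordinal.{u}) (M : (Fin (k + 1) → ℕ → S) → Fin (k + 1))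
    (N : (Fin (k + 1) → ℕ → S) → ℕ) (hf : Set.InjOn f {η | ∀ l, η l ∈ U})
    (hN : ∀ η ν, (∀ l, η l ∈ U) → (∀ l, ν l ∈ U) → f ν < f η → ∀ n, N η ≤ n →
        restrictAt ν (M η) n ≠ restrictAt η (M η) n) : Module.Free ℤ (GU a U) := by
  classical
  have huniq : ∀ (ν : ↥(LambdaRes Λ)) η n η' n', Used U M N ν η n → Used U M N ν η' n' →
      η = η' ∧ n = n' := by
    rintro ν η n η' n' ⟨h1, h2, h3⟩ ⟨h1', h2', h3'⟩
    have e : restrictAt η.1 (M η.1) n = restrictAt η'.1 (M η'.1) n' :=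
      congrArg Subtype.val (h3.symm.trans h3')
    obtain ⟨e1, rfl⟩ := restrictAt_inj e
    refine ⟨?_, rfl⟩
    rcases lt_trichotomy (f η.1) (f η'.1) with h | h | h
    · exact absurd (e1 ▸ e) (hN _ _ h1' h1 h n h2')
    · exact Subtype.ext (hf h1 h1' h)
    · exact absurd (e1 ▸ e.symm) (hN _ _ h1 h1' h n h2)
  have hdec : ∀ (ν ν' : ↥(LambdaRes Λ)) η n η' n' m', Used U M N ν η n → Used U M N ν' η' n' →
      ν' = resMem η m' n → m' ≠ M η.1 → f η'.1 < f η.1 := by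
    rintro ν ν' η n η' n' m' ⟨h1, h2, h3⟩ ⟨h1', h2', h3'⟩ h4 hm
    have e : restrictAt η.1 m' n = restrictAt η'.1 (M η'.1) n' :=
      congrArg Subtype.val (h4.symm.trans h3')
    obtain ⟨e1, rfl⟩ := restrictAt_inj e
    rcases lt_trichotomy (f η.1) (f η'.1) with h | h | h
    · exact absurd (e1 ▸ e) (hN _ _ h1' h1 h n h2')
    · rw [hf h1 h1' h] at hm
      exact absurd e1 hm
    · exact h
  let V := Gen k S Λ →₀ ℚ
  let E : Gen k S Λ → V := fun g => Finsupp.single g 1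
  obtain ⟨x, hx1, hx2⟩ := exists_xval U f M N huniq hdec (fun ν => E (Gen.X ν))
    (fun η n => (n.factorial : ℤ) • E (Gen.Y η (n + 1)) - E (Gen.Y η n) - a η n • E Gen.Z)
  have hy : ∀ η : ↥Λ, ∃ y : ℕ → V, ((∀ l, η.1 l ∈ U) → ∀ n, N η.1 ≤ n → y n = E (Gen.Y η n)) ∧
      ∀ n, (n.factorial : ℤ) • y (n + 1) = y n + (a η n • E Gen.Z + ∑ m, x (resMem η m n)) := by
    intro η
    by_cases hη : ∀ l, η.1 l ∈ U
    · obtain ⟨y, h1, h2⟩ := exists_down (fun n => E (Gen.Y η n))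
        (fun n => a η n • E Gen.Z + ∑ m, x (resMem η m n)) (N η.1)
      refine ⟨y, fun _ => h1, fun n => ?_⟩
      rcases lt_or_ge n (N η.1) with h | h
      · exact h2 n h
      · rw [h1 n h, h1 (n + 1) (by omega), hx2 _ η n ⟨hη, h, rfl⟩]
        abel
    · obtain ⟨y, h⟩ := exists_up (fun n => a η n • E Gen.Z + ∑ m, x (resMem η m n))
      exact ⟨y, fun h => absurd h hη, h⟩
  choose y hy1 hy2 using hy
  let φ0 : FreeAbelianGroup (Gen k S Λ) →+ V := FreeAbelianGroup.lift fun g =>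
    match g with
    | Gen.X ν => x ν
    | Gen.Y η n => y η n
    | Gen.Z => E Gen.Z
  have φX : ∀ ν, φ0 (FreeAbelianGroup.of (Gen.X ν)) = x ν := fun ν => FreeAbelianGroup.lift_apply_of _ _
  have φY : ∀ η n, φ0 (FreeAbelianGroup.of (Gen.Y η n)) = y η n := fun η n => FreeAbelianGroup.lift_apply_of _ _
  have φZ : φ0 (FreeAbelianGroup.of Gen.Z) = E Gen.Z := FreeAbelianGroup.lift_apply_of _ _
  have hrel : relSub a ≤ φ0.ker := by
    rw [relSub, AddSubgroup.closure_le]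
    rintro _ ⟨η, n, rfl⟩
    simp only [SetLike.mem_coe, AddMonoidHom.mem_ker, relEl, map_sub, map_zsmul, map_sum, φX, φY, φZ]
    rw [hy2]
    abel
  let φ : Gx a →+ V := QuotientAddGroup.lift (relSub a) φ0 hrel
  let B : Set (Gen k S Λ) := {g | match g with
    | Gen.X ν => (∃ (η : Fin (k + 1) → ℕ → S) (m : Fin (k + 1)) (n : ℕ), (∀ l, η l ∈ U) ∧
        (ν : Res k S) = restrictAt η m n) ∧ ¬ ∃ η n, Used U M N ν η n
    | Gen.Y η n => (∀ l, η.1 l ∈ U) ∧ N η.1 ≤ n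
    | Gen.Z => True}
  let b : B → Gx a := fun g => QuotientAddGroup.mk (FreeAbelianGroup.of g.1)
  have hφb : ∀ g : B, φ (b g) = E g.1 := by
    rintro ⟨g, hg⟩
    change φ0 (FreeAbelianGroup.of g) = E g
    match g, hg with
    | Gen.X ν, hg => rw [φX, hx1 _ hg.2]
    | Gen.Y η n, hg => rw [φY, hy1 _ hg.1 _ hg.2]
    | Gen.Z, _ => exact φZ
  have hli : LinearIndependent ℤ b := by
    have h1 : LinearIndependent ℚ E := Finsupp.linearIndependent_single_one ℚ _
    have h2 : LinearIndependent ℤ E := h1.restrict_scalars (by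
      intro r s h
      simpa using h)
    have h3 : LinearIndependent ℤ (fun g : B => E g.1) := h2.comp _ Subtype.val_injective
    refine LinearIndependent.of_comp φ.toIntLinearMap ?_
    have : (φ.toIntLinearMap ∘ b) = fun g : B => E g.1 := funext hφb
    rw [this]
    exact h3
  have hrelG : ∀ η n, (n.factorial : ℤ) • yg a η (n + 1) - yg a η n - a η n • zg a
      - ∑ m, xg a (resMem η m n) = 0 := by
    intro η n
    have : (QuotientAddGroup.mk' (relSub a)) (relEl a η n) = 0 := by
      rw [← AddMonoidHom.mem_ker, QuotientAddGroup.ker_mk']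
      exact AddSubgroup.subset_closure ⟨η, n, rfl⟩
    simp only [relEl, map_sub, map_zsmul, map_sum] at this
    exact this
  let P : Submodule ℤ (Gx a) := Submodule.span ℤ (Set.range b)
  have hzP : zg a ∈ P := Submodule.subset_span ⟨⟨Gen.Z, trivial⟩, rfl⟩
  have hyP : ∀ η : ↥Λ, (∀ l, η.1 l ∈ U) → ∀ n, N η.1 ≤ n → yg a η n ∈ P := fun η h n hn =>
    Submodule.subset_span ⟨⟨Gen.Y η n, h, hn⟩, rfl⟩
  have hxP0 : ∀ ν : ↥(LambdaRes Λ), (∃ (η : Fin (k + 1) → ℕ → S) (m : Fin (k + 1)) (n : ℕ),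
      (∀ l, η l ∈ U) ∧ (ν : Res k S) = restrictAt η m n) → (¬ ∃ η n, Used U M N ν η n) →
      xg a ν ∈ P := fun ν h h' => Submodule.subset_span ⟨⟨Gen.X ν, h, h'⟩, rfl⟩
  have hxP1 : ∀ o : Ordinal.{u}, ∀ ν η n, Used U M N ν η n → f η.1 = o → xg a ν ∈ P := by
    intro o
    induction o using WellFoundedLT.induction with
    | ind o ih =>
      intro ν η n hu ho
      have h := hrelG η n
      rw [← Finset.add_sum_erase _ _ (Finset.mem_univ (M η.1)), ← hu.2.2] at h
      have h' : xg a ν = (n.factorial : ℤ) • yg a η (n + 1) - yg a η n - a η n • zg a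
        - ∑ m ∈ Finset.univ.erase (M η.1), xg a (resMem η m n) := by
        rw [← sub_eq_zero, ← neg_eq_zero, ← h]
        abel
      rw [h']
      refine P.sub_mem (P.sub_mem (P.sub_mem (P.smul_mem _ (hyP _ hu.1 _ (by have := hu.2.1; omega)))
        (hyP _ hu.1 _ hu.2.1)) (P.smul_mem _ hzP)) (P.sum_mem fun m hm => ?_)
      by_cases hex : ∃ η' n', Used U M N (resMem η m n) η' n'
      · obtain ⟨η', n', hu'⟩ := hex
        exact ih (f η'.1) (ho ▸ hdec _ _ _ _ _ _ _ hu hu' rfl (Finset.ne_of_mem_erase hm)) _ η' n' hu' rfl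
      · exact hxP0 _ ⟨η.1, m, n, hu.1, rfl⟩ hex
  have hxP : ∀ ν : ↥(LambdaRes Λ), (∃ (η : Fin (k + 1) → ℕ → S) (m : Fin (k + 1)) (n : ℕ),
      (∀ l, η l ∈ U) ∧ (ν : Res k S) = restrictAt η m n) → xg a ν ∈ P := by
    intro ν h
    by_cases hex : ∃ η' n', Used U M N ν η' n'
    · obtain ⟨η', n', hu'⟩ := hex
      exact hxP1 _ _ _ _ hu' rfl
    · exact hxP0 _ h hex
  have hyP' : ∀ η : ↥Λ, (∀ l, η.1 l ∈ U) → ∀ d n, N η.1 ≤ n + d → yg a η n ∈ P := by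
    intro η h d
    induction d with
    | zero => exact fun n hn => hyP η h n hn
    | succ d ih =>
      intro n hn
      have h' : yg a η n = (n.factorial : ℤ) • yg a η (n + 1) - a η n • zg a
        - ∑ m, xg a (resMem η m n) := by
        rw [← sub_eq_zero, ← neg_eq_zero, ← hrelG η n]
        abel
      rw [h']
      exact P.sub_mem (P.sub_mem (P.smul_mem _ (ih (n + 1) (by omega))) (P.smul_mem _ hzP))
        (P.sum_mem fun m _ => hxP _ ⟨η.1, m, n, h, rfl⟩)
  have hGP : GU a U = P.toAddSubgroup := by
    apply le_antisymm
    · rw [GU, AddSubgroup.closure_le]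
      rintro g ((hg | ⟨η, n, h, rfl⟩) | ⟨η, m, n, ν, h, hν, rfl⟩)
      · rw [Set.mem_singleton_iff.1 hg]
        exact hzP
      · exact hyP' η h (N η.1) n (by omega)
      · exact hxP ν ⟨η, m, n, h, hν⟩
    · have : P ≤ AddSubgroup.toIntSubmodule (GU a U) := by
        refine Submodule.span_le.2 ?_
        rintro _ ⟨⟨g, hg⟩, rfl⟩
        refine AddSubgroup.subset_closure ?_
        match g, hg with
        | Gen.X ν, hg =>
          obtain ⟨⟨η, m, n, h, hν⟩, -⟩ := hg
          exact Or.inr ⟨η, m, n, ν, h, hν, rfl⟩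
        | Gen.Y η n, hg => exact Or.inl (Or.inr ⟨η, n, hg.1, rfl⟩)
        | Gen.Z, _ => exact Or.inl (Or.inl rfl)
      exact this
  have hfree : Module.Free ℤ P := Module.Free.of_basis (Module.Basis.span hli)
  rw [hGP]
  exact hfree

end core

end Sh883

open Sh883 in
/-- Let `x = (S, Λ, a)` be an abelian-group `k`-parameter and let `U` be a
set of functions `ℕ → S` of cardinality at most `ℵ_k`. Then the subgroup `G_U` of `G_x`
is a free abelian group. -/
theorem stmt6 {k : ℕ} {S : Type u} (Λ : Set (Fin (k + 1) → ℕ → S)) (a : ↥Λ → ℕ → ℤ)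
    (U : Set (ℕ → S)) (hU : #U ≤ Cardinal.aleph k) :
    Module.Free ℤ (GU a U) := by
  obtain ⟨f, M, N, hf, hN⟩ := exists_M U hU
  exact core a U f M N hf hN
end

section
/- Let x = (S, Λ, a) be a full abelian-group k-parameter (Λ consists of all (k+1)-tuples of functions from ℕ to S). If U is a set of functions from ℕ to S whose cardinality is at least the (k+1)-fold cardinal successor (|S| + ℵ_0)^{+(k+1)} of |S| + ℵ_0, then the subgroup G_U of G_x is not a free abelian group. -/
open Cardinal

namespace Sh883

theorem free_tuple {α : Type u} (μ : Cardinal.{u}) (hμ : ℵ₀ ≤ μ) (k : ℕ) :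
    ∀ (f : (Fin k → α) → Set α), (∀ t, #(f t) ≤ μ) → ∀ A : Set α,
      Order.succ^[k + 1] μ ≤ #A →
      ∃ t : Fin (k + 1) → α, ∀ m, t m ∈ A ∧ t m ∉ f (m.removeNth t) := by
  have hinf : ∀ j, μ ≤ Order.succ^[j] μ := by
    intro j
    induction j with
    | zero => exact le_rfl
    | succ j ih =>
      rw [Function.iterate_succ_apply']
      exact ih.trans (Order.le_succ _)
  induction k with
  | zero =>
    intro f hf A hA
    have h1 : μ < #A := lt_of_lt_of_le (Order.lt_succ μ) (by simpa using hA)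
    have : ∃ p ∈ A, p ∉ f Fin.elim0 := by
      by_contra! hc
      exact absurd ((Cardinal.mk_le_mk_of_subset hc).trans (hf _)) (not_le.2 h1)
    obtain ⟨p, hp, hpf⟩ := this
    refine ⟨fun _ => p, fun m => ⟨hp, ?_⟩⟩
    convert hpf
  | succ k ih =>
    intro f hf A hA
    rw [Function.iterate_succ_apply'] at hA
    have hlt : Order.succ^[k + 1] μ < #A := lt_of_lt_of_le (Order.lt_succ _) hA
    obtain ⟨A', hA'A, hA'⟩ := Cardinal.le_mk_iff_exists_subset.1 hlt.le
    have hA'inf : ℵ₀ ≤ #A' := by rw [hA']; exact hμ.trans (hinf _)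
    let C : Set α := ⋃ t : Fin (k + 1) → A', f (fun i => (t i : α))
    have hC : #C ≤ #A' := by
      refine (Cardinal.mk_iUnion_le _).trans ?_
      have h1 : #(Fin (k + 1) → A') ≤ #A' := by
        have := Cardinal.power_nat_le (n := k + 1) hA'inf
        rw [Cardinal.mk_arrow]
        simp only [Cardinal.mk_fin, Cardinal.lift_natCast, Cardinal.lift_uzero,
          Cardinal.power_natCast]
        exact this
      have h2 : (⨆ t : Fin (k + 1) → A', #(f (fun i => (t i : α)))) ≤ #A' := by
        refine ciSup_le' fun t => (hf _).trans ?_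
        rw [hA']; exact hinf _
      exact (mul_le_mul' h1 h2).trans (Cardinal.mul_eq_self hA'inf).le
    have : ∃ p ∈ A, p ∉ C := by
      by_contra! hc
      have := (Cardinal.mk_le_mk_of_subset hc).trans hC
      rw [hA'] at this
      exact absurd this (not_le.2 hlt)
    obtain ⟨p, hp, hpC⟩ := this
    obtain ⟨t, ht⟩ := ih (fun t => f (Fin.cons p t)) (fun t => hf _) A' hA'.ge
    refine ⟨Fin.cons p t, fun m => ?_⟩
    refine Fin.cases ?_ (fun m => ?_) m
    · refine ⟨by simpa using hp, ?_⟩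
      intro hmem
      apply hpC
      refine Set.mem_iUnion.2 ⟨fun i => ⟨t i, (ht i).1⟩, ?_⟩
      simpa using hmem
    · refine ⟨by simpa using hA'A (ht m).1, ?_⟩
      have := (ht m).2
      have e : (Fin.succ m).removeNth (Fin.cons p t : Fin (k + 2) → α)
          = Fin.cons p (m.removeNth t) := by
        funext i
        refine Fin.cases ?_ (fun i => ?_) i
        · simp [Fin.removeNth]
        · simp [Fin.removeNth]
      rw [e]
      simpa using this

theorem exists_closed {α : Type u} (μ : Cardinal.{u}) (hμ : ℵ₀ ≤ μ)
    (E : Finset α → Set α) (hE : ∀ s, #(E s) ≤ μ) (W₀ : Set α) (hW₀ : #W₀ ≤ μ) :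
    ∃ W : Set α, W₀ ⊆ W ∧ #W ≤ μ ∧ ∀ s : Finset α, (s : Set α) ⊆ W → E s ⊆ W := by
  classical
  let nx : Set α → Set α := fun W => W ∪ ⋃ s : Finset W, E (s.map (Function.Embedding.subtype _))
  have hnx : ∀ W : Set α, #W ≤ μ → #(nx W) ≤ μ := by
    intro W hW
    refine (Cardinal.mk_union_le _ _).trans ?_
    refine Cardinal.add_le_of_le hμ hW ((Cardinal.mk_iUnion_le _).trans ?_)
    have h1 : #(Finset W) ≤ μ := by
      refine (Cardinal.mk_le_of_injective (f := Finset.toList) (fun s t h => by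
        rw [← Finset.toList_toFinset s, h, Finset.toList_toFinset])).trans ?_
      exact (Cardinal.mk_list_le_max _).trans (max_le hμ hW)
    have h2 : (⨆ s : Finset W, #(E (s.map (Function.Embedding.subtype _)))) ≤ μ :=
      ciSup_le' fun s => hE _
    exact (mul_le_mul' h1 h2).trans (Cardinal.mul_eq_self hμ).le
  let V : ℕ → Set α := fun n => nx^[n] W₀
  have hV : ∀ n, V (n + 1) = nx (V n) := fun n => Function.iterate_succ_apply' _ _ _
  have hcard : ∀ n, #(V n) ≤ μ := by
    intro n
    induction n with
    | zero => exact hW₀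
    | succ n ih => rw [hV]; exact hnx _ ih
  have hmono : Monotone V := monotone_nat_of_le_succ fun n => by
    rw [hV]; exact Set.subset_union_left
  refine ⟨⋃ n, V n, Set.subset_iUnion V 0, ?_, ?_⟩
  · have h := Cardinal.mk_iUnion_le_lift (fun n => V n)
    simp only [Cardinal.lift_uzero, Cardinal.mk_nat, Cardinal.lift_aleph0] at h
    refine (by simpa using h : _ ≤ _).trans ?_
    have h2 : (⨆ n, #(V n)) ≤ μ := ciSup_le' hcard
    exact (mul_le_mul' hμ (by simpa using h2)).trans (Cardinal.mul_eq_self hμ).le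
  · intro s hs
    have : ∃ n, (s : Set α) ⊆ V n := by
      have := Set.finite_subset_iUnion (s.finite_toSet) hs
      exact (hmono.directed_le).exists_mem_subset_of_finset_subset_biUnion hs
    obtain ⟨n, hn⟩ := this
    refine Set.Subset.trans ?_ (Set.subset_iUnion V (n + 1))
    rw [hV]
    refine Set.Subset.trans ?_ Set.subset_union_right
    have e : (s.subtype (· ∈ V n)).map (Function.Embedding.subtype _) = s :=
      Finset.subtype_map_of_mem fun x hx => hn hx
    intro x hx
    exact Set.mem_iUnion.2 ⟨s.subtype (· ∈ V n), by rw [e]; exact hx⟩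

theorem eq_zero_of_fact (v : ℕ → ℤ) (h : ∀ n, (n.factorial : ℤ) * v (n + 1) = v n) : v 0 = 0 := by
  have h2 : ∀ n, ∃ c, v 0 = c * v n := by
    intro n
    induction n with
    | zero => exact ⟨1, by simp⟩
    | succ n ih =>
      obtain ⟨c, hc⟩ := ih
      exact ⟨c * n.factorial, by rw [hc, ← h n]; ring⟩
  by_contra h0
  obtain ⟨c, hc⟩ := h2 ((v 0).natAbs + 1)
  rw [← h ((v 0).natAbs + 1)] at hc
  have hd : (((v 0).natAbs + 1).factorial : ℤ) ∣ v 0 := ⟨c * v ((v 0).natAbs + 1 + 1), by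
    linear_combination hc⟩
  have := Nat.le_of_dvd (Int.natAbs_pos.2 h0) (Int.natCast_dvd.1 hd)
  have := Nat.self_le_factorial ((v 0).natAbs + 1)
  omega

section
variable {k : ℕ} {S : Type u} {Λ : Set (Fin (k + 1) → ℕ → S)} (a : ↥Λ → ℕ → ℤ)

theorem GU_mono {U V : Set (ℕ → S)} (h : U ⊆ V) : GU a U ≤ GU a V := by
  refine AddSubgroup.closure_mono ?_
  rintro g ((hg | ⟨η, n, hη, rfl⟩) | ⟨η, m, n, ν, hη, hν, rfl⟩)
  · exact Or.inl (Or.inl hg)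
  · exact Or.inl (Or.inr ⟨η, n, fun l => h (hη l), rfl⟩)
  · exact Or.inr ⟨η, m, n, ν, fun l => h (hη l), hν, rfl⟩

theorem zg_mem (U : Set (ℕ → S)) : zg a ∈ GU a U :=
  AddSubgroup.subset_closure (Or.inl (Or.inl rfl))

theorem yg_mem {U : Set (ℕ → S)} (η : ↥Λ) (n : ℕ) (hη : ∀ l, η.1 l ∈ U) : yg a η n ∈ GU a U :=
  AddSubgroup.subset_closure (Or.inl (Or.inr ⟨η, n, hη, rfl⟩))

theorem xg_mem {U : Set (ℕ → S)} (η : Fin (k + 1) → ℕ → S) (m : Fin (k + 1)) (n : ℕ)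
    (ν : ↥(LambdaRes Λ)) (hη : ∀ l, η l ∈ U) (hν : (ν : Res k S) = restrictAt η m n) :
    xg a ν ∈ GU a U :=
  AddSubgroup.subset_closure (Or.inr ⟨η, m, n, ν, hη, hν, rfl⟩)

theorem GU_finite {W : Set (ℕ → S)} {g : Gx a} (hg : g ∈ GU a W) :
    ∃ s : Finset (ℕ → S), (s : Set (ℕ → S)) ⊆ W ∧ g ∈ GU a (s : Set (ℕ → S)) := by
  classical
  induction hg using AddSubgroup.closure_induction with
  | mem g hg =>
    rcases hg with ((hg | ⟨η, n, hη, rfl⟩) | ⟨η, m, n, ν, hη, hν, rfl⟩)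
    · exact ⟨∅, by simp, by rw [Set.mem_singleton_iff.1 hg]; exact zg_mem a _⟩
    · refine ⟨Finset.univ.image η.1, ?_, yg_mem a η n (fun l => by simp)⟩
      intro f hf
      obtain ⟨l, -, rfl⟩ := Finset.mem_image.1 (Finset.mem_coe.1 hf)
      exact hη l
    · refine ⟨Finset.univ.image η, ?_, xg_mem a η m n ν (fun l => by simp) hν⟩
      intro f hf
      obtain ⟨l, -, rfl⟩ := Finset.mem_image.1 (Finset.mem_coe.1 hf)
      exact hη l
  | zero => exact ⟨∅, by simp, zero_mem _⟩
  | add x y _ _ hx hy =>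
    obtain ⟨s, hs, hxs⟩ := hx
    obtain ⟨t, ht, hyt⟩ := hy
    refine ⟨s ∪ t, by simp [hs, ht], add_mem (GU_mono a (by simp) hxs) (GU_mono a (by simp) hyt)⟩
  | neg x _ hx =>
    obtain ⟨s, hs, hxs⟩ := hx
    exact ⟨s, hs, neg_mem hxs⟩

theorem closure_countable' {G : Type*} [AddCommGroup G] {s : Set G} (hs : s.Countable) :
    (AddSubgroup.closure s : Set G).Countable := by
  have : Countable s := hs.to_subtype
  have h : (AddSubgroup.closure s : Set G) ⊆
      Set.range (FreeAbelianGroup.lift (fun x : s => (x : G))) := by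
    have : AddSubgroup.closure s ≤ (FreeAbelianGroup.lift (fun x : s => (x : G))).range := by
      rw [AddSubgroup.closure_le]
      intro x hx
      exact ⟨FreeAbelianGroup.of ⟨x, hx⟩, by simp⟩
    exact this
  have : Countable (FreeAbelianGroup s) :=
    (FreeAbelianGroup.equivFinsupp s).toEquiv.countable_iff.2 inferInstance
  exact (Set.countable_range _).mono h

theorem GU_countable (s : Finset (ℕ → S)) : (GU a (s : Set (ℕ → S)) : Set (Gx a)).Countable := by
  apply closure_countable'
  have hT : {η : Fin (k + 1) → ℕ → S | ∀ l, η l ∈ (s : Set (ℕ → S))}.Countable :=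
    Set.countable_pi fun _ => s.countable_toSet
  refine ((Set.countable_singleton _).union ?_).union ?_
  · have hT' : {η : ↥Λ | ∀ l, η.1 l ∈ (s : Set (ℕ → S))}.Countable :=
      hT.preimage Subtype.val_injective
    refine ((hT'.prod (Set.countable_univ (α := ℕ))).image (fun p => yg a p.1 p.2)).mono ?_
    rintro g ⟨η, n, hη, rfl⟩
    exact ⟨(η, n), ⟨hη, trivial⟩, rfl⟩
  · have hN : {ν : ↥(LambdaRes Λ) | ν.1 ∈ (fun p : (Fin (k + 1) → ℕ → S) × (Fin (k + 1) × ℕ) =>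
        restrictAt p.1 p.2.1 p.2.2) '' ({η | ∀ l, η l ∈ (s : Set (ℕ → S))} ×ˢ Set.univ)}.Countable :=
      ((hT.prod Set.countable_univ).image _).preimage Subtype.val_injective
    refine (hN.image (xg a)).mono ?_
    rintro g ⟨η, m, n, ν, hη, hν, rfl⟩
    exact ⟨ν, ⟨(η, m, n), ⟨hη, trivial⟩, hν.symm⟩, rfl⟩

theorem rel_eq (η : ↥Λ) (n : ℕ) : (n.factorial : ℤ) • yg a η (n + 1)
    = yg a η n + a η n • zg a + ∑ m, xg a (resMem η m n) := by
  have h : (QuotientAddGroup.mk' (relSub a)) (relEl a η n) = 0 :=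
    (QuotientAddGroup.eq_zero_iff _).2 (AddSubgroup.subset_closure ⟨η, n, rfl⟩)
  unfold relEl at h
  simp only [map_sub, map_zsmul, map_sum] at h
  have h' : (n.factorial : ℤ) • yg a η (n + 1) - yg a η n - a η n • zg a
      - ∑ m, xg a (resMem η m n) = 0 := h
  rw [← sub_eq_zero, ← h']
  abel

open Classical in
theorem exists_psi (η : ↥Λ) : ∃ ψ : Gx a →+ ℚ, ψ (yg a η 0) = 1 ∧
    ∀ W : Set (ℕ → S), (∃ l, η.1 l ∉ W) → ∀ g ∈ GU a W, ψ g = 0 := by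
  let φ : FreeAbelianGroup (Gen k S Λ) →+ ℚ := FreeAbelianGroup.lift (fun g => match g with
    | Gen.X _ => 0
    | Gen.Y η' n => if η' = η then (∏ i ∈ Finset.range n, (i.factorial : ℚ))⁻¹ else 0
    | Gen.Z => 0)
  have hφ : relSub a ≤ φ.ker := by
    unfold relSub
    rw [AddSubgroup.closure_le]
    rintro g ⟨η', n, rfl⟩
    change φ _ = 0
    unfold relEl
    simp only [map_sub, map_zsmul, map_sum, φ, FreeAbelianGroup.lift_apply_of]
    have : (n.factorial : ℚ) ≠ 0 := by positivity
    by_cases h : η' = η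
    · simp [h, Finset.prod_range_succ, this]
    · simp [h]
  refine ⟨QuotientAddGroup.lift _ φ hφ, ?_, ?_⟩
  · change φ _ = 1
    simp [φ]
  · rintro W ⟨l, hl⟩ g hg
    have : GU a W ≤ (QuotientAddGroup.lift _ φ hφ).ker := by
      unfold GU
      rw [AddSubgroup.closure_le]
      rintro g ((hg | ⟨η', n, hη, rfl⟩) | ⟨η', m, n, ν, hη, hν, rfl⟩)
      · rw [Set.mem_singleton_iff.1 hg]
        change φ _ = 0
        simp [φ]
      · change φ _ = 0
        have : η' ≠ η := by
          rintro rfl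
          exact hl (hη l)
        simp [φ, this]
      · change φ _ = 0
        simp [φ]
    exact this hg

end

end Sh883

open Sh883 in
/-- Let `x = (S, Λ, a)` be a full abelian-group `k`-parameter (`Λ` is the
set of all `(k+1)`-tuples of functions `ℕ → S`).  If `U` is a set of functions `ℕ → S`
whose cardinality is at least the `(k+1)`-fold cardinal successor of `|S| + ℵ₀`, then the
subgroup `G_U` of `G_x` is not a free abelian group. -/
theorem stmt9 {k : ℕ} {S : Type u} (Λ : Set (Fin (k + 1) → ℕ → S))
    (hfull : Λ = Set.univ) (a : ↥Λ → ℕ → ℤ)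
    (U : Set (ℕ → S)) (hU : Order.succ^[k + 1] (#S + ℵ₀) ≤ #U) :
    ¬ Module.Free ℤ (GU a U) := by
  classical
  intro hfree
  let b := Module.Free.chooseBasis ℤ (GU a U)
  set μ : Cardinal.{u} := #S + ℵ₀ with hμdef
  have hμ : ℵ₀ ≤ μ := self_le_add_left _ _
  have hSμ : #S ≤ μ := self_le_add_right _ _
  have hUne : U.Nonempty := by
    by_contra hne
    rw [Set.not_nonempty_iff_eq_empty] at hne
    subst hne
    rw [Function.iterate_succ_apply'] at hU
    have := lt_of_lt_of_le (Order.lt_succ _) hU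
    simp at this
  obtain ⟨f₀, -⟩ := hUne
  let d : S := f₀ 0
  let D : Set (ℕ → S) := Set.range (fun (s : List S) (n : ℕ) => s.getD n d)
  have hD : #D ≤ μ :=
    Cardinal.mk_range_le.trans ((Cardinal.mk_list_le_max _).trans (max_le hμ hSμ))
  choose T hTU hT using fun i => GU_finite a (b i).2
  let E : Finset (ℕ → S) → Set (ℕ → S) := fun s =>
    ⋃ g ∈ {g : GU a U | (g : Gx a) ∈ GU a (s : Set (ℕ → S))}, ⋃ i ∈ (b.repr g).support,
      (T i : Set (ℕ → S))
  have hE : ∀ s, #(E s) ≤ μ := by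
    intro s
    refine le_trans ?_ hμ
    rw [Cardinal.le_aleph0_iff_set_countable]
    refine Set.Countable.biUnion ((GU_countable a s).preimage Subtype.val_injective) ?_
    intro g _
    exact Set.Countable.biUnion (Finset.countable_toSet _) fun i _ => (T i).countable_toSet
  have hcl : ∀ t : Fin k → ℕ → S, ∃ W : Set (ℕ → S), (Set.range t ∪ D ⊆ W) ∧ #W ≤ μ ∧
      ∀ s : Finset (ℕ → S), (s : Set (ℕ → S)) ⊆ W → E s ⊆ W := by
    intro t
    apply exists_closed μ hμ E hE
    refine (Cardinal.mk_union_le _ _).trans (Cardinal.add_le_of_le hμ ?_ hD)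
    exact le_trans ((Set.finite_range t).lt_aleph0.le) hμ
  choose W hW hWμ hWE using hcl
  have hclosed : ∀ t (g : GU a U), (g : Gx a) ∈ GU a (W t) → ∀ i, b.repr g i ≠ 0 →
      ((b i : GU a U) : Gx a) ∈ GU a (W t) := by
    intro t g hg i hi
    obtain ⟨s, hs, hgs⟩ := GU_finite a hg
    refine GU_mono a (Set.Subset.trans ?_ (hWE t s hs)) (hT i)
    intro f hf
    refine Set.mem_biUnion (x := g) hgs (Set.mem_biUnion (x := i) ?_ hf)
    simpa using hi
  obtain ⟨t, ht⟩ := free_tuple μ hμ k W hWμ U hU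
  let η : ↥Λ := ⟨t, by rw [hfull]; trivial⟩
  obtain ⟨ψ, hψ1, hψ0⟩ := exists_psi a η
  let y : ℕ → GU a U := fun n => ⟨yg a η n, yg_mem a η n fun l => (ht l).1⟩
  let z : GU a U := ⟨zg a, zg_mem a U⟩
  let x : Fin (k + 1) → ℕ → GU a U := fun m n =>
    ⟨xg a (resMem η m n), xg_mem a t m n _ (fun l => (ht l).1) rfl⟩
  have hrel : ∀ n, (n.factorial : ℤ) • y (n + 1) = y n + a η n • z + ∑ m, x m n := by
    intro n
    apply Subtype.ext
    simpa [y, z, x] using rel_eq a η n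
  have hxW : ∀ m n, ((x m n : GU a U) : Gx a) ∈ GU a (W (m.removeNth t)) := by
    intro m n
    refine xg_mem a (Function.update t m
      (fun j => (List.ofFn fun i : Fin n => t m i).getD j d)) m n _ ?_ ?_
    · intro l
      by_cases hl : l = m
      · subst hl
        rw [Function.update_self]
        exact hW _ (Or.inr ⟨_, rfl⟩)
      · rw [Function.update_of_ne hl]
        obtain ⟨j, rfl⟩ := Fin.exists_succAbove_eq hl
        exact hW _ (Or.inl ⟨j, rfl⟩)
    · change restrictAt t m n = _
      unfold restrictAt
      congr 1
      · congr 1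
        funext i
        simp
      · funext l hl
        rw [Function.update_of_ne hl]
  have key : ∀ i, ψ (b i : GU a U) = 0 ∨ b.repr (y 0) i = 0 := by
    intro i
    by_cases hi : ∃ m : Fin (k + 1), ((b i : GU a U) : Gx a) ∈ GU a (W (m.removeNth t))
    · obtain ⟨m, hm⟩ := hi
      exact Or.inl (hψ0 _ ⟨m, (ht m).2⟩ _ hm)
    · push Not at hi
      right
      have hz : b.repr z i = 0 := by
        by_contra h
        exact hi 0 (hclosed _ z (zg_mem a _) i h)
      have hx : ∀ m n, b.repr (x m n) i = 0 := by
        intro m n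
        by_contra h
        exact hi m (hclosed _ _ (hxW m n) i h)
      apply eq_zero_of_fact (fun n => b.repr (y n) i)
      intro n
      have := congrArg (fun g => b.coord i g) (hrel n)
      simp only [map_add, map_zsmul, map_sum, Module.Basis.coord_apply, hz, hx] at this
      simpa using this
  have hsum := b.linearCombination_repr (y 0)
  have h2 : ψ ((y 0 : GU a U) : Gx a) = 0 := by
    rw [← hsum, Finsupp.linearCombination_apply, Finsupp.sum]
    rw [AddSubgroup.val_finsetSum, map_sum]
    refine Finset.sum_eq_zero fun i _ => ?_
    rcases key i with h | h
    · simp [h]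
    · simp [h]
  have h3 : ψ (yg a η 0) = 0 := h2
  rw [hψ1] at h3
  exact one_ne_zero h3
end

section
/- Let x = (S, Λ, a) be a full abelian-group k-parameter (Λ consists of all (k+1)-tuples of functions from ℕ to S) with |S| ≥ ℵ_{k+1}. Then G_x is not a free abelian group. -/
open Cardinal

namespace Sh883

universe u

lemma step {S : Type u} (c : Cardinal.{u}) (hc : ℵ₀ ≤ c) (hS : Order.succ c ≤ #S) :
    ∃ W : Set (ℕ → S), #W ≤ Order.succ c ∧
      ∀ (I : Type u) (_ : #I ≤ c) (g : I → List S → Set (ℕ → S)),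
        (∀ i s, (g i s).Countable) →
          ∃ η ∈ W, ∀ i n, η ∉ g i (List.ofFn fun j : Fin n => η j) := by
  classical
  let K : Type u := (Order.succ c).ord.ToType
  have hK : #K = Order.succ c := Cardinal.mk_ord_toType _
  have hreg := Cardinal.isRegular_succ hc
  have hcof : Order.cof K = Order.succ c := by
    rw [Ordinal.cof_toType]; exact hreg.cof_ord
  have hbd : ∀ A : Set K, #A ≤ c → ∃ b, ∀ a ∈ A, a < b := by
    intro A hA
    by_contra hcon
    push Not at hcon
    have : IsCofinal A := hcon
    have h2 := Order.cof_le this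
    rw [hcof] at h2
    exact absurd (h2.trans hA) (not_le.2 (Order.lt_succ c))
  have hIio : ∀ b : K, #(Set.Iio b) ≤ c := fun b =>
    Order.lt_succ_iff.1 (Cardinal.mk_Iio_toType_ord_lt b)
  obtain ⟨e⟩ : Nonempty (K ↪ S) := by
    rw [← Cardinal.le_def, hK]; exact hS
  let good : K → (ℕ → K) → Prop := fun δ f => (∀ n, f n < δ) ∧ ∀ β < δ, ∃ n, β < f n
  let lad : K → ℕ → K := fun δ => if h : ∃ f, good δ f then h.choose else fun _ => δ
  have hlad : ∀ δ, (∃ f, good δ f) → good δ (lad δ) := by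
    intro δ h
    simp only [lad, dif_pos h]
    exact h.choose_spec
  have hinj : Set.InjOn (fun δ n => e (lad δ n)) {δ | ∃ f, good δ f} := by
    intro δ hδ δ' hδ' h
    have h' : lad δ = lad δ' := by
      funext n; exact e.injective (congrFun h n)
    have g1 := hlad δ hδ
    have g2 := hlad δ' hδ'
    rw [← h'] at g2
    rcases lt_trichotomy δ δ' with hl | hl | hl
    · obtain ⟨n, hn⟩ := g2.2 _ hl
      exact absurd (g1.1 n) (not_lt.2 hn.le)
    · exact hl
    · obtain ⟨n, hn⟩ := g1.2 _ hl
      exact absurd (g2.1 n) (not_lt.2 hn.le)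
  refine ⟨Set.range (fun δ n => e (lad δ n)), Cardinal.mk_range_le.trans hK.le, ?_⟩
  intro I hI g hg
  let A : K → Set K := fun γ => ⋃ p : I × List (Set.Iio γ),
    {δ | (∃ f, good δ f) ∧ (fun n => e (lad δ n)) ∈ g p.1 (p.2.map fun x => e x.1)}
  have hA : ∀ γ, #(A γ) ≤ c := by
    intro γ
    refine (Cardinal.mk_iUnion_le_sum_mk).trans ?_
    refine (Cardinal.sum_le_sum _ (fun _ => ℵ₀) ?_).trans ?_
    · intro p
      rw [Cardinal.le_aleph0_iff_set_countable]
      refine Set.MapsTo.countable_of_injOn (f := fun δ n => e (lad δ n))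
        (t := g p.1 (p.2.map fun x => e x.1)) ?_ ?_ (hg _ _)
      · intro δ hδ; exact hδ.2
      · exact hinj.mono fun δ hδ => hδ.1
    · rw [Cardinal.sum_const']
      have hl : #(List (Set.Iio γ)) ≤ c :=
        (Cardinal.mk_list_le_max _).trans (max_le hc (hIio γ))
      rw [Cardinal.mk_prod, Cardinal.lift_id, Cardinal.lift_id]
      calc #I * #(List (Set.Iio γ)) * ℵ₀ ≤ c * c * c := by gcongr
        _ = c := by rw [Cardinal.mul_eq_self hc, Cardinal.mul_eq_self hc]
  have hex : ∀ γ, ∃ b, γ < b ∧ ∀ a ∈ A γ, a < b := by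
    intro γ
    obtain ⟨b, hb⟩ := hbd (A γ) (hA γ)
    obtain ⟨b', hb'⟩ := hbd {γ} (by simpa using (Cardinal.one_le_aleph0.trans hc))
    exact ⟨max b b', lt_max_of_lt_right (hb' γ rfl), fun a ha => lt_max_of_lt_left (hb a ha)⟩
  choose h hh1 hh2 using hex
  obtain ⟨b0, _⟩ := hbd ∅ (by simp)
  let γ : ℕ → K := fun n => h^[n] b0
  have hγ : ∀ n, γ (n+1) = h (γ n) := fun n => Function.iterate_succ_apply' h n b0
  have hγm : StrictMono γ := strictMono_nat_of_lt_succ fun n => by rw [hγ]; exact hh1 _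
  obtain ⟨b1, hb1⟩ := hbd (Set.range γ) (by
    refine le_trans ?_ hc
    rw [Cardinal.le_aleph0_iff_set_countable]
    exact Set.countable_range γ)
  have hne : ({b | ∀ n, γ n < b} : Set K).Nonempty := ⟨b1, fun n => hb1 _ ⟨n, rfl⟩⟩
  let δ : K := wellFounded_lt.min {b | ∀ n, γ n < b} hne
  have hδ1 : ∀ n, γ n < δ := wellFounded_lt.min_mem _ hne
  have hδ2 : ∀ β < δ, ∃ n, β < γ n := by
    intro β hβ
    by_contra hcon
    push Not at hcon
    refine wellFounded_lt.not_lt_min {b | ∀ n, γ n < b} (x := β) ?_ hβ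
    intro n
    exact (hγm (Nat.lt_succ_self n)).trans_le (hcon (n+1))
  have hgd : ∃ f, good δ f := ⟨γ, hδ1, hδ2⟩
  refine ⟨_, ⟨δ, rfl⟩, ?_⟩
  intro i n hmem
  have hl := hlad δ hgd
  have hN : ∃ N, ∀ j : Fin n, lad δ j < γ N := by
    choose N hN using fun j : Fin n => hδ2 _ (hl.1 j)
    refine ⟨Finset.univ.sup N, fun j => (hN j).trans_le ?_⟩
    exact hγm.monotone (Finset.le_sup (Finset.mem_univ j))
  obtain ⟨N, hN⟩ := hN
  have : δ ∈ A (γ N) := by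
    refine Set.mem_iUnion.2 ⟨(i, List.ofFn fun j : Fin n => ⟨lad δ j, hN j⟩), hgd, ?_⟩
    convert hmem using 2
    simp [List.map_ofFn, Function.comp_def]
  have h3 := hh2 _ _ this
  rw [← hγ] at h3
  exact lt_asymm h3 (hδ1 _)

lemma comb_s10 {k : ℕ} {S : Type u} (hS : Cardinal.aleph (k + 1) ≤ #S)
    (F : Res k S → Set (Fin (k + 1) → ℕ → S)) (hF : ∀ ν, (F ν).Countable) :
    ∃ η : Fin (k + 1) → ℕ → S, ∀ m n, η ∉ F (restrictAt η m n) := by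
  classical
  have hst : ∀ m : Fin (k+1), Order.succ (Cardinal.aleph.{u} (m : ℕ)) ≤ #S := by
    intro m
    refine le_trans ?_ hS
    rw [Cardinal.succ_aleph]
    apply Cardinal.aleph_le_aleph.2
    have : ((m : ℕ) : Ordinal.{u}) ≤ k := by exact_mod_cast Nat.lt_succ_iff.1 m.2
    gcongr
  choose W hW1 hW2 using fun m : Fin (k+1) => step _ (Cardinal.aleph0_le_aleph _) (hst m)
  have hne : Nonempty S := by
    rw [← Cardinal.mk_ne_zero_iff]
    intro h0
    have := (Cardinal.aleph0_le_aleph _).trans hS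
    rw [h0] at this
    exact absurd this (not_le.2 Cardinal.aleph0_pos)
  have key : ∀ j ≤ k + 1, ∃ η : Fin (k+1) → ℕ → S, ∀ m : Fin (k+1), k + 1 - j ≤ m →
      η m ∈ W m ∧ ∀ η' : Fin (k+1) → ℕ → S, (∀ l, m ≤ l → η' l = η l) →
        (∀ l, l < m → η' l ∈ W l) → ∀ n, η' ∉ F (restrictAt η' m n) := by
    intro j
    induction j with
    | zero => 
      intro _
      exact ⟨fun _ _ => Classical.arbitrary S, fun m hm => absurd m.2 (by omega)⟩
    | succ j ih =>
      intro hj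
      obtain ⟨η, hη⟩ := ih (by omega)
      let m : Fin (k+1) := ⟨k - j, by omega⟩
      let I : Type u := (l : {l : Fin (k+1) // l < m}) → W l.1
      have hI : #I ≤ Cardinal.aleph.{u} (m : ℕ) := by
        simp only [I]
        rw [Cardinal.mk_pi]
        refine (Cardinal.prod_le_prod _ (fun _ => Cardinal.aleph.{u} (m : ℕ)) ?_).trans ?_
        · intro l
          refine (hW1 l.1).trans ?_
          rw [Cardinal.succ_aleph]
          apply Cardinal.aleph_le_aleph.2
          have := l.2
          have : (l.1 : ℕ) + 1 ≤ (m : ℕ) := this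
          exact_mod_cast this
        · rw [Cardinal.prod_const]
          simp only [Cardinal.mk_fintype, Cardinal.lift_natCast, Cardinal.lift_uzero]
          exact Cardinal.power_nat_le (Cardinal.aleph0_le_aleph _)
      let T : I → (ℕ → S) → Fin (k+1) → ℕ → S := fun i τ l =>
        if h : l < m then (i ⟨l, h⟩).1 else if l = m then τ else η l
      have hTm : ∀ i τ, T i τ m = τ := by intro i τ; simp [T]
      have hTne : ∀ i τ τ' l, l ≠ m → T i τ l = T i τ' l := by
        intro i τ τ' l hl; simp [T, hl]
      let τ0 : ℕ → S := fun _ => Classical.arbitrary S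
      obtain ⟨τ, hτW, hτ⟩ := hW2 m I hI
        (fun i s => {τ | T i τ ∈ F ⟨m, s, fun l _ => T i τ0 l⟩}) (by
          intro i s
          refine (hF ⟨m, s, fun l _ => T i τ0 l⟩).preimage_of_injOn (f := T i) ?_
          intro a _ b _ hab
          rw [← hTm i a, hab, hTm])
      refine ⟨Function.update η m τ, fun m' hm' => ?_⟩
      rcases eq_or_ne m' m with rfl | hne'
      · refine ⟨by simpa using hτW, ?_⟩
        intro η' h1 h2 n hmem
        refine hτ (fun l => ⟨η' l, h2 l l.2⟩) n ?_
        set i : I := (fun l => ⟨η' l, h2 l l.2⟩) with hi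
        have hη' : T i τ = η' := by
          funext l
          by_cases hl : l < m
          · simp [T, hl, hi]
          · have := h1 l (not_lt.1 hl)
            rw [this]
            by_cases hlm : l = m
            · subst hlm; simp [T]
            · simp [T, hl, hlm]
        show T i τ ∈ F _
        convert hmem using 2
        rw [restrictAt]
        congr 1
        · have := h1 m le_rfl
          simp only [Function.update_self] at this
          rw [this]
        · funext l hl
          rw [← hη']
          exact hTne _ _ _ _ hl
      · have hv : (m' : ℕ) ≠ k - j := fun h => hne' (Fin.ext h)
        have hlt : m < m' := by
          show k - j < (m' : ℕ)
          omega
        obtain ⟨h1, h2⟩ := hη m' (by omega)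
        refine ⟨by rw [Function.update_of_ne hne']; exact h1, ?_⟩
        intro η' ha hb
        refine h2 η' (fun l hl => ?_) hb
        rw [ha l hl, Function.update_of_ne]
        exact (hlt.trans_le hl).ne'
  obtain ⟨η, hη⟩ := key (k+1) le_rfl
  exact ⟨η, fun m n => (hη m (by omega)).2 η (fun _ _ => rfl)
    (fun l _ => (hη l (by omega)).1) n⟩

/-- coefficients -/
noncomputable def cf : ℕ → ℚ
  | 0 => 1
  | n + 1 => cf n / (n.factorial : ℚ)

open Classical in
/-- value of the coordinate functional on generators -/
noncomputable def phiG {k : ℕ} {S : Type u} {Λ : Set (Fin (k + 1) → ℕ → S)} (η : ↥Λ) :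
    Gen k S Λ → ℚ
  | Gen.X _ => 0
  | Gen.Y η' n => if η' = η then cf n else 0
  | Gen.Z => 0

/-- the coordinate functional -/
noncomputable def phi {k : ℕ} {S : Type u} {Λ : Set (Fin (k + 1) → ℕ → S)} (a : ↥Λ → ℕ → ℤ)
    (η : ↥Λ) : Gx a →+ ℚ :=
  QuotientAddGroup.lift (relSub a) (FreeAbelianGroup.lift (phiG η)) (by
    rw [relSub, AddSubgroup.closure_le]
    rintro _ ⟨η', n, rfl⟩
    show FreeAbelianGroup.lift (phiG η) (relEl a η' n) = 0
    simp only [relEl, map_sub, map_zsmul, map_sum, FreeAbelianGroup.lift_apply_of, phiG]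
    by_cases h : η' = η
    · have : (n.factorial : ℚ) ≠ 0 := by exact_mod_cast n.factorial_ne_zero
      simp [h, cf]
      field_simp
      simp
    · simp [h])

/-- generators in the quotient -/
def q {k : ℕ} {S : Type u} {Λ : Set (Fin (k + 1) → ℕ → S)} (a : ↥Λ → ℕ → ℤ)
    (t : Gen k S Λ) : Gx a := QuotientAddGroup.mk' (relSub a) (FreeAbelianGroup.of t)

lemma phi_q {k : ℕ} {S : Type u} {Λ : Set (Fin (k + 1) → ℕ → S)} (a : ↥Λ → ℕ → ℤ)
    (η : ↥Λ) (t : Gen k S Λ) : phi a η (q a t) = phiG η t := by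
  show FreeAbelianGroup.lift (phiG η) (FreeAbelianGroup.of t) = _
  simp

lemma phi_countable {k : ℕ} {S : Type u} {Λ : Set (Fin (k + 1) → ℕ → S)} (a : ↥Λ → ℕ → ℤ)
    (g : Gx a) : {η | phi a η g ≠ 0}.Countable := by
  obtain ⟨f, rfl⟩ := QuotientAddGroup.mk'_surjective (relSub a) g
  induction f using FreeAbelianGroup.induction_on with
  | zero => simp
  | of t =>
    change {η | phi a η (q a t) ≠ 0}.Countable
    simp only [phi_q]
    cases t with
    | X _ => simp [phiG]
    | Z => simp [phiG]
    | Y η' n =>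
      refine (Set.countable_singleton η').mono ?_
      intro η hη
      by_contra hne
      exact hη (if_neg fun h => hne h.symm)
  | neg t ht => simpa using ht
  | add x y hx hy =>
    refine (hx.union hy).mono ?_
    intro η hη
    by_contra hcon
    simp only [Set.mem_union, Set.mem_ofPred_eq, not_or, not_not] at hcon
    exact hη (by rw [map_add, map_add, hcon.1, hcon.2, add_zero])

lemma rel_q {k : ℕ} {S : Type u} {Λ : Set (Fin (k + 1) → ℕ → S)} (a : ↥Λ → ℕ → ℤ)
    (η : ↥Λ) (n : ℕ) : (n.factorial : ℤ) • q a (Gen.Y η (n+1)) = q a (Gen.Y η n)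
      + a η n • q a Gen.Z + ∑ m, q a (Gen.X (resMem η m n)) := by
  have h : QuotientAddGroup.mk' (relSub a) (relEl a η n) = 0 := by
    rw [QuotientAddGroup.mk'_apply, QuotientAddGroup.eq_zero_iff]
    exact AddSubgroup.subset_closure ⟨η, n, rfl⟩
  rw [relEl, map_sub, map_sub, map_sub, map_zsmul, map_zsmul, map_sum] at h
  rw [sub_sub, sub_sub, sub_eq_zero, ← add_assoc] at h
  exact h

lemma div_zero (r : ℕ → ℤ) (h : ∀ n, (n.factorial : ℤ) * r (n+1) = r n) : r 0 = 0 := by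
  have h1 : ∀ n, r 0 = (∏ i ∈ Finset.range n, (i.factorial : ℤ)) * r n := by
    intro n
    induction n with
    | zero => simp
    | succ n ih => rw [ih, Finset.prod_range_succ, mul_assoc, h]
  by_contra hne
  have h2 : ∀ n : ℕ, 0 < n → (n : ℤ) ∣ r 0 := by
    intro n hn
    rw [h1 (n+1), Finset.prod_range_succ]
    have : (n : ℤ) ∣ (n.factorial : ℤ) := by
      exact_mod_cast Nat.dvd_factorial hn le_rfl
    exact (this.mul_left _).mul_right _
  have h3 := Int.le_of_dvd (abs_pos.2 hne) ((dvd_abs _ _).2 (h2 ((r 0).natAbs + 1) (by omega)))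
  push_cast at h3
  rw [Int.abs_eq_natAbs] at h3
  omega

end Sh883
open Sh883 in
/-- Let `x = (S, Λ, a)` be a full abelian-group `k`-parameter (`Λ` is
the set of all `(k+1)`-tuples of functions `ℕ → S`) with `|S| ≥ ℵ_{k+1}`.  Then `G_x` is
not a free abelian group. -/
theorem stmt10 {k : ℕ} {S : Type u} (Λ : Set (Fin (k + 1) → ℕ → S))
    (hfull : Λ = Set.univ) (a : ↥Λ → ℕ → ℤ)
    (hS : Cardinal.aleph (k + 1) ≤ #S) :
    ¬ Module.Free ℤ (Gx a) := by
  classical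
  subst hfull
  intro hfree
  let b := Module.Free.chooseBasis ℤ (Gx a)
  -- bad tuples attached to an element
  let D : Gx a → Set (Fin (k+1) → ℕ → S) := fun g =>
    ⋃ i ∈ (b.repr g).support, {η | phi a ⟨η, trivial⟩ (b i) ≠ 0}
  have hD : ∀ g, (D g).Countable := by
    intro g
    refine Set.Countable.biUnion (Finset.countable_toSet _) fun i _ => ?_
    exact (phi_countable a (b i)).preimage_of_injOn (f := fun η => ⟨η, trivial⟩)
      (fun x _ y _ h => congrArg Subtype.val h)
  obtain ⟨η, hη⟩ := comb_s10 hS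
    (fun ν => D (q a Gen.Z) ∪ if h : ν ∈ LambdaRes Set.univ then D (q a (Gen.X ⟨ν, h⟩)) else ∅)
    (by
      intro ν
      refine (hD _).union ?_
      split_ifs
      · exact hD _
      · exact Set.countable_empty)
  let η' : ↥(Set.univ : Set (Fin (k+1) → ℕ → S)) := ⟨η, trivial⟩
  have hZ : η ∉ D (q a Gen.Z) := fun h => hη 0 0 (Or.inl h)
  have hX : ∀ m n, η ∉ D (q a (Gen.X (resMem η' m n))) := by
    intro m n h
    refine hη m n (Or.inr ?_)
    have hm : restrictAt η m n ∈ LambdaRes Set.univ := (resMem η' m n).2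
    rw [dif_pos hm]
    exact h
  have hD0 : ∀ g, η ∉ D g → ∀ i, phi a η' (b i) ≠ 0 → b.repr g i = 0 := by
    intro g hg i hi
    by_contra hne
    exact hg (Set.mem_biUnion (Finsupp.mem_support_iff.2 hne) hi)
  have hY : ∀ i, phi a η' (b i) ≠ 0 → b.repr (q a (Gen.Y η' 0)) i = 0 := by
    intro i hi
    refine div_zero (fun n => b.repr (q a (Gen.Y η' n)) i) fun n => ?_
    have := congrArg (fun g => b.repr g i) (rel_q a η' n)
    simp only [map_add, map_zsmul, map_sum, Finsupp.add_apply, Finsupp.smul_apply,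
      Finsupp.finsetSum_apply, hD0 _ hZ i hi, hD0 _ (hX _ _) i hi] at this
    simpa using this
  have h1 : phi a η' (q a (Gen.Y η' 0)) = 1 := by
    rw [phi_q]; simp [phiG, cf]
  rw [← b.linearCombination_repr (q a (Gen.Y η' 0)), Finsupp.linearCombination_apply,
    Finsupp.sum, map_sum, Finset.sum_eq_zero] at h1
  · exact zero_ne_one h1
  · intro i _
    rw [map_zsmul]
    by_cases hi : phi a η' (b i) = 0
    · rw [hi, smul_zero]
    · rw [hY i hi, zero_smul]
end

section
/- Let x = (S, Λ) be a combinatorial k-parameter with S a set of ordinals, and let F be a regressive function on x which is finitary or simple. Then (x, F) is ℵ_{k+1}-free: every subset Λ' ⊆ Λ of cardinality less than ℵ_{k+1} is free for (x, F). -/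
open Cardinal

namespace Sh883

/-- Elements of `Λ ∪ Λ_0 ∪ … ∪ Λ_k`: either a full tuple or a restricted tuple.
Here `S` is a set of ordinals. -/
abbrev FullOrRes (k : ℕ) (Sset : Set Ordinal.{u}) : Type (u + 1) :=
  (Fin (k + 1) → ℕ → ↥Sset) ⊕ Res k ↥Sset

/-- The set of ordinal values of the `l`-th coordinate of a (full or restricted) tuple. -/
def coordVals {k : ℕ} {Sset : Set Ordinal.{u}} (w : FullOrRes k Sset) (l : Fin (k + 1)) :
    Set Ordinal.{u} :=
  match w with
  | Sum.inl ν => Set.range fun i : ℕ => (ν l i : Ordinal)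
  | Sum.inr ρ =>
      if h : l = ρ.m then {o : Ordinal | ∃ s ∈ ρ.seq, (s : Ordinal) = o}
      else Set.range fun i : ℕ => (ρ.rest l h i : Ordinal)

/-- `F` is a regressive function on the combinatorial `k`-parameter `(Sset, Λ)` (with
`Sset` a set of ordinals): `F` assigns to each `η̄ ∈ Λ` a countable subset of
`Λ ∪ Λ_0 ∪ … ∪ Λ_k` such that for all `ℓ ≤ k`,
`sup(range η_ℓ) > sup(⋃ {ℓ-th coordinate values of members of F(η̄)})`. -/
def Regressive {k : ℕ} {Sset : Set Ordinal.{u}} (Λ : Set (Fin (k + 1) → ℕ → ↥Sset))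
    (F : ↥Λ → Set (FullOrRes k Sset)) : Prop :=
  (∀ η : ↥Λ, (F η).Countable) ∧
    (∀ η : ↥Λ, ∀ w ∈ F η, Sum.elim (· ∈ Λ) (· ∈ LambdaRes Λ) w) ∧
    ∀ (η : ↥Λ) (l : Fin (k + 1)),
      sSup (⋃ w ∈ F η, coordVals w l) <
        ⨆ i : ℕ, (((η : Fin (k + 1) → ℕ → ↥Sset) l i : Ordinal))

/-- `F` is finitary: each `F(η̄)` is finite. -/
def Finitary {k : ℕ} {Sset : Set Ordinal.{u}} {Λ : Set (Fin (k + 1) → ℕ → ↥Sset)}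
    (F : ↥Λ → Set (FullOrRes k Sset)) : Prop :=
  ∀ η : ↥Λ, (F η).Finite

/-- `F` is simple: `F(η̄)` depends only on `η_k(0)`. -/
def Simple {k : ℕ} {Sset : Set Ordinal.{u}} {Λ : Set (Fin (k + 1) → ℕ → ↥Sset)}
    (F : ↥Λ → Set (FullOrRes k Sset)) : Prop :=
  ∀ η η' : ↥Λ,
    (η : Fin (k + 1) → ℕ → ↥Sset) (Fin.last k) 0 =
      (η' : Fin (k + 1) → ℕ → ↥Sset) (Fin.last k) 0 → F η = F η'

/-- `Λ'` is free for `(x, F)`: there are an enumeration `⟨η̄^α : α < α*⟩` of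
`Λ' ∪ ⋃{F(η̄) : η̄ ∈ Λ'}` and indices `⟨ℓ_α : α < α*⟩` such that (i) if `η̄^α ∈ Λ'` then
`F(η̄^α) ⊆ {η̄^β : β < α} ∪ {η̄^β↾⟨m,n⟩ : β < α, m ≤ k, n ∈ ℕ}`, and (ii) if
`η̄^α ∈ Λ'` then for some `n`,
`η̄^α↾⟨ℓ_α,n⟩ ∉ {η̄^β↾⟨ℓ_α,n⟩ : β < α, η̄^β ∈ Λ'} ∪ {η̄^β : β < α}`. -/
def FreeFor {k : ℕ} {Sset : Set Ordinal.{u}} (Λ : Set (Fin (k + 1) → ℕ → ↥Sset))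
    (F : ↥Λ → Set (FullOrRes k Sset)) (Λ' : Set (Fin (k + 1) → ℕ → ↥Sset)) : Prop :=
  ∃ (o : Ordinal.{u + 1}) (e : Set.Iio o → FullOrRes k Sset) (L : Set.Iio o → Fin (k + 1)),
    Function.Injective e ∧
    (Set.range e =
      Sum.inl '' Λ' ∪ ⋃ (η : ↥Λ) (_ : (η : Fin (k + 1) → ℕ → ↥Sset) ∈ Λ'), F η) ∧
    (∀ (α : Set.Iio o) (η : ↥Λ),
      e α = Sum.inl (η : Fin (k + 1) → ℕ → ↥Sset) → (η : Fin (k + 1) → ℕ → ↥Sset) ∈ Λ' →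
      F η ⊆ {w | ∃ β : Set.Iio o, (β : Ordinal) < (α : Ordinal) ∧
        (w = e β ∨ ∃ (ν : Fin (k + 1) → ℕ → ↥Sset) (m : Fin (k + 1)) (n : ℕ),
          e β = Sum.inl ν ∧ w = Sum.inr (restrictAt ν m n))}) ∧
    ∀ (α : Set.Iio o) (η : ↥Λ),
      e α = Sum.inl (η : Fin (k + 1) → ℕ → ↥Sset) → (η : Fin (k + 1) → ℕ → ↥Sset) ∈ Λ' →
      ∃ n : ℕ, ∀ β : Set.Iio o, (β : Ordinal) < (α : Ordinal) →
        e β ≠ Sum.inr (restrictAt (η : Fin (k + 1) → ℕ → ↥Sset) (L α) n) ∧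
        ∀ ν : Fin (k + 1) → ℕ → ↥Sset, e β = Sum.inl ν → ν ∈ Λ' →
          restrictAt (η : Fin (k + 1) → ℕ → ↥Sset) (L α) n ≠ restrictAt ν (L α) n

end Sh883

namespace Sh883Aux
open Sh883 Set

universe v w

/-- lexicographic combination -/
def comb {T : Type v} (g : T → Ordinal.{w}) (r : Ordinal.{w} → T → T → Prop) (x y : T) : Prop :=
  g x < g y ∨ (g x = g y ∧ r (g x) x y)

theorem comb_wo {T : Type v} (g : T → Ordinal.{w}) (r : Ordinal.{w} → T → T → Prop)
    (h : ∀ o, IsWellOrder T (r o)) : IsWellOrder T (comb g r) := by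
  have wf : WellFounded (comb g r) := by
    have key : ∀ o : Ordinal.{w}, ∀ x, g x = o → Acc (comb g r) x := by
      intro o
      induction o using WellFoundedLT.induction with
      | ind o ih =>
        intro x
        induction x using (h o).wf.induction with
        | _ x ih2 =>
          intro hx
          constructor
          rintro y (hy | ⟨hy, hr⟩)
          · exact ih (g y) (hx ▸ hy) y rfl
          · refine ih2 y ?_ (hy.trans hx)
            rw [hy, hx] at hr
            exact hr
    exact ⟨fun x => key _ x rfl⟩
  refine { wf := wf, trichotomous := ?_ }
  intro a b hab hba
  rcases lt_trichotomy (g a) (g b) with hlt | heq | hgt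
  · exact absurd (Or.inl hlt) hab
  · refine (h (g a)).trichotomous a b (fun hr => hab (Or.inr ⟨heq, hr⟩))
      (fun hr => hba (Or.inr ⟨heq.symm, heq ▸ hr⟩))
  · exact absurd (Or.inl hgt) hba

theorem exists_wo (T : Type v) : ∃ r : T → T → Prop, IsWellOrder T r :=
  ⟨WellOrderingRel, inferInstance⟩

/-- the interval order lemma -/
theorem interval_aux {K : Type v} (A : Set K) (hA : A.Countable) (s t : K → Ordinal.{w})
    (hst : ∀ a ∈ A, t a < s a) (σ : Ordinal.{w}) :
    ∃ r : K → K → Prop, IsWellOrder K r ∧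
      (∀ a ∈ A, ∀ b ∈ A, s a ≤ σ → s b ≤ σ → s a ≤ t b → r a b) ∧
      (∀ b ∈ A, s b ≤ σ → ∃ τ < s b, ∀ a ∈ A, s a ≤ σ → r a b → t a ≤ τ) := by
  classical
  induction σ using WellFoundedLT.induction with
  | ind σ ih =>
  obtain ⟨f, hf⟩ := Set.countable_iff_exists_injOn.1 hA
  obtain ⟨r0, hr0⟩ := exists_wo K
  have ih' : ∀ τ : Ordinal.{w}, ∃ r : K → K → Prop, IsWellOrder K r ∧ (τ < σ →
      (∀ a ∈ A, ∀ b ∈ A, s a ≤ τ → s b ≤ τ → s a ≤ t b → r a b) ∧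
      (∀ b ∈ A, s b ≤ τ → ∃ τ' < s b, ∀ a ∈ A, s a ≤ τ → r a b → t a ≤ τ')) := by
    intro τ
    by_cases h : τ < σ
    · obtain ⟨r, h1, h2⟩ := ih τ h
      exact ⟨r, h1, fun _ => h2⟩
    · exact ⟨r0, hr0, fun h' => absurd h' h⟩
  choose R hRwo hR using ih'
  -- index function
  let P : K → ℕ → Prop := fun c j => ∃ d ∈ A, s d ≤ σ ∧ f d = j ∧ (c = d ∨ s c ≤ t d)
  have hP : ∀ c ∈ A, s c ≤ σ → ∃ j, P c j := fun c hc hs => ⟨f c, c, hc, hs, rfl, Or.inl rfl⟩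
  let j : K → ℕ := fun c => if h : ∃ j, P c j then Nat.find h else 0
  have hj : ∀ c ∈ A, s c ≤ σ → P c (j c) := by
    intro c hc hs
    have h := hP c hc hs
    simp only [j, dif_pos h]
    exact Nat.find_spec h
  have hjmin : ∀ c n, P c n → j c ≤ n := by
    intro c n h
    have h' : ∃ j, P c j := ⟨n, h⟩
    simp only [j, dif_pos h']
    exact Nat.find_min' h' h
  let D : ℕ → Ordinal.{w} := fun n => if h : ∃ d ∈ A, s d ≤ σ ∧ f d = n then t h.choose else 0
  have hD : ∀ d ∈ A, s d ≤ σ → D (f d) = t d := by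
    intro d hd hs
    have h : ∃ d' ∈ A, s d' ≤ σ ∧ f d' = f d := ⟨d, hd, hs, rfl⟩
    have := hf h.choose_spec.1 hd h.choose_spec.2.2
    simp only [D, dif_pos h]
    rw [this]
  -- the order: index, then bit, then R
  let bit : K → Ordinal.{w} := fun c => if f c = j c then 1 else 0
  let g : K → Ordinal.{w} := fun c => (j c : Ordinal.{w})
  let Q : ℕ → K → K → Prop := fun n => comb bit (fun _ => R (D n))
  have hQ : ∀ n, IsWellOrder K (Q n) := fun n => comb_wo _ _ (fun _ => hRwo _)
  let r : K → K → Prop := comb g (fun o => if h : ∃ n : ℕ, (n : Ordinal.{w}) = o then Q h.choose else r0)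
  have hrwo : IsWellOrder K r := by
    refine comb_wo _ _ (fun o => ?_)
    split_ifs with h
    · exact hQ _
    · exact hr0
  have hr : ∀ a b, r a b ↔ (j a < j b ∨ (j a = j b ∧ Q (j a) a b)) := by
    intro a b
    have h : ∃ n : ℕ, (n : Ordinal.{w}) = g a := ⟨j a, rfl⟩
    have h' : h.choose = j a := Nat.cast_injective (R := Ordinal.{w}) h.choose_spec
    simp only [r, comb, dif_pos h, h']
    simp only [g, Nat.cast_lt, Nat.cast_inj]
  refine ⟨r, hrwo, ?_, ?_⟩
  · intro a ha b hb hsa hsb hab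
    rw [hr]
    obtain ⟨d, hd, hsd, hfd, hbd⟩ := hj b hb hsb
    have htb := hst b hb
    have htd := hst d hd
    have hstd : s a ≤ t d := by
      rcases hbd with rfl | h
      · exact hab
      · exact hab.trans (htb.le.trans h)
    have hle : j a ≤ j b := hjmin a _ ⟨d, hd, hsd, hfd, Or.inr hstd⟩
    rcases hle.lt_or_eq with h | h
    · exact Or.inl h
    refine Or.inr ⟨h, ?_⟩
    have had : f a ≠ j a := by
      intro h1
      have : a = d := hf ha hd (by rw [h1, h, hfd])
      subst this
      exact absurd hstd (not_le.2 htd)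
    have hba : bit a = 0 := if_neg had
    by_cases hb1 : f b = j b
    · left
      rw [hba]
      simp [bit, hb1]
    · have hbb : bit b = 0 := if_neg hb1
      right
      refine ⟨by rw [hba, hbb], ?_⟩
      rw [h, ← hfd, hD d hd hsd]
      have hbd' : s b ≤ t d := by
        rcases hbd with rfl | h
        · exact absurd hfd hb1
        · exact h
      exact (hR (t d) (htd.trans_le hsd)).1 a ha b hb hstd hbd' hab
  · intro b hb hsb
    obtain ⟨d, hd, hsd, hfd, hbd⟩ := hj b hb hsb
    have htb := hst b hb
    have htd := hst d hd
    have hpos : 0 < s b := lt_of_le_of_lt (zero_le) htb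
    -- same block bound
    have h1 : ∃ τ < s b, ∀ a ∈ A, s a ≤ σ → j a = j b → Q (j a) a b → t a ≤ τ := by
      by_cases hb1 : f b = j b
      · have : b = d := hf hb hd (by rw [hb1, hfd])
        subst this
        refine ⟨t b, htb, ?_⟩
        intro a ha hsa hjab _
        obtain ⟨d', hd', hsd', hfd', had'⟩ := hj a ha hsa
        have : d' = b := hf hd' hd (by rw [hfd', hjab, hfd])
        subst this
        rcases had' with rfl | h
        · exact le_rfl
        · exact (hst a ha).le.trans h
      · have hbd' : s b ≤ t d := by
          rcases hbd with rfl | h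
          · exact absurd hfd hb1
          · exact h
        obtain ⟨τ, hτ, hτ2⟩ := (hR (t d) (htd.trans_le hsd)).2 b hb hbd'
        refine ⟨τ, hτ, ?_⟩
        intro a ha hsa hjab hq
        have hbb : bit b = 0 := if_neg hb1
        rcases hq with hq | ⟨hq, hq2⟩
        · rw [hbb] at hq
          exact absurd hq not_lt_zero
        · have hfa : f a ≠ j a := by
            intro h
            rw [hbb] at hq
            simp [bit, h] at hq
          obtain ⟨d', hd', hsd', hfd', had'⟩ := hj a ha hsa
          have : d' = d := hf hd' hd (by rw [hfd', hjab, hfd])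
          subst this
          rw [← hfd', hD d' hd hsd] at hq2
          refine hτ2 a ha ?_ hq2
          rcases had' with rfl | h
          · exact absurd hfd' hfa
          · exact h
    obtain ⟨τ, hτ, hτ2⟩ := h1
    let G : ℕ → Ordinal.{w} := fun n => if D n < s b then D n else 0
    refine ⟨max τ ((Finset.range (j b)).sup G), max_lt hτ ?_, ?_⟩
    · rw [Finset.sup_lt_iff (by simpa using hpos)]
      intro n _
      simp only [G]
      split_ifs with h
      · exact h
      · exact hpos
    · intro a ha hsa hab
      rw [hr] at hab
      rcases hab with hab | ⟨hab, hq⟩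
      · refine le_trans ?_ (le_max_right _ _)
        refine le_trans ?_ (Finset.le_sup (Finset.mem_range.2 hab))
        obtain ⟨d', hd', hsd', hfd', had'⟩ := hj a ha hsa
        have hta : t a ≤ t d' := by
          rcases had' with rfl | h
          · exact le_rfl
          · exact (hst a ha).le.trans h
        have hlt : t d' < s b := by
          by_contra hcon
          have := hjmin b _ ⟨d', hd', hsd', hfd', Or.inr (not_lt.1 hcon)⟩
          omega
        simp only [G]
        rw [← hfd', hD d' hd' hsd', if_pos hlt]
        exact hta
      · exact (hτ2 a ha hsa hab hq).trans (le_max_left _ _)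

theorem interval {K : Type v} (A : Set K) (hA : A.Countable) (s t : K → Ordinal.{w})
    (hst : ∀ a ∈ A, t a < s a) :
    ∃ r : K → K → Prop, IsWellOrder K r ∧
      (∀ a ∈ A, ∀ b ∈ A, s a ≤ t b → r a b) ∧
      (∀ b ∈ A, ∃ τ < s b, ∀ a ∈ A, r a b → t a ≤ τ) := by
  have : Countable (s '' A) := (hA.image s).to_subtype
  have hb : BddAbove (s '' A) := Ordinal.bddAbove_of_small
  obtain ⟨σ, hσ⟩ := hb
  have hσ' : ∀ a ∈ A, s a ≤ σ := fun a ha => hσ ⟨a, ha, rfl⟩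
  obtain ⟨r, h1, h2, h3⟩ := interval_aux A hA s t hst σ
  refine ⟨r, h1, fun a ha b hb h => h2 a ha b hb (hσ' a ha) (hσ' b hb) h, fun b hb => ?_⟩
  obtain ⟨τ, h4, h5⟩ := h3 b hb (hσ' b hb)
  exact ⟨τ, h4, fun a ha => h5 a ha (hσ' a ha)⟩

theorem restrictAt_eq {k : ℕ} {S : Type v} {η ν : Fin (k + 1) → ℕ → S} {l : Fin (k + 1)} {n : ℕ}
    (h : restrictAt η l n = restrictAt ν l n) :
    (∀ i < n, η l i = ν l i) ∧ ∀ m, m ≠ l → η m = ν m := by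
  unfold restrictAt at h
  injection h with h1 h2 h3
  constructor
  · intro i hi
    have := congrFun (List.ofFn_injective h2) ⟨i, hi⟩
    exact this
  · intro m hm
    exact congrFun (congrFun h3 m) hm

theorem restrictAt_inj_n {k : ℕ} {S : Type v} (η : Fin (k + 1) → ℕ → S) (l : Fin (k + 1)) :
    Function.Injective (fun n => restrictAt η l n) := by
  intro a b h
  have := congrArg (fun x => x.seq.length) h
  simpa [restrictAt] using this

theorem restrictAt_ne {k : ℕ} {S : Type v} {η ν : Fin (k + 1) → ℕ → S} (l : Fin (k + 1))
    (h : η ≠ ν) : ∃ N, ∀ n ≥ N, restrictAt η l n ≠ restrictAt ν l n := by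
  obtain ⟨m, hm⟩ := Function.ne_iff.1 h
  obtain ⟨i, hi⟩ := Function.ne_iff.1 hm
  refine ⟨i + 1, fun n hn he => ?_⟩
  obtain ⟨h1, h2⟩ := restrictAt_eq he
  by_cases hml : m = l
  · subst hml
    exact hi (h1 i (by omega))
  · exact hm (h2 m hml)

theorem restrictAt_ne_finite {k : ℕ} {S : Type v} {η : Fin (k + 1) → ℕ → S} (l : Fin (k + 1))
    (X : Set (Fin (k + 1) → ℕ → S)) (hX : X.Finite) (h : η ∉ X) :
    ∃ N, ∀ n ≥ N, ∀ ν ∈ X, restrictAt η l n ≠ restrictAt ν l n := by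
  induction X, hX using Set.Finite.induction_on with
  | empty => exact ⟨0, by simp⟩
  | @insert a s _ _ ih =>
    simp only [Set.mem_insert_iff, not_or] at h
    obtain ⟨N, hN⟩ := ih h.2
    obtain ⟨M, hM⟩ := restrictAt_ne l h.1
    refine ⟨max N M, fun n hn ν hν => ?_⟩
    rcases hν with rfl | hν
    · exact hM n (le_trans (le_max_right _ _) hn)
    · exact hN n (le_trans (le_max_left _ _) hn) ν hν

/-- good well order on Ω -/
def Good {k : ℕ} {S : Type v} (F : (Fin (k + 1) → ℕ → S) → Set ((Fin (k + 1) → ℕ → S) ⊕ Res k S))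
    (Ω : Set (Fin (k + 1) → ℕ → S)) (u : (Fin (k + 1) → ℕ → S) → Finset (Fin (k + 1))) : Prop :=
  ∃ r : (Fin (k + 1) → ℕ → S) → (Fin (k + 1) → ℕ → S) → Prop,
    IsWellOrder (Fin (k + 1) → ℕ → S) r ∧
    (∀ η ∈ Ω, ∀ ν ∈ Ω, Sum.inl ν ∈ F η → r ν η) ∧
    ∀ η ∈ Ω, ∃ l ∈ u η, ∃ n, ∀ ν ∈ Ω, (r ν η → restrictAt η l n ≠ restrictAt ν l n) ∧
      (r ν η ∨ ν = η → Sum.inr (restrictAt η l n) ∉ F ν)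

theorem good_finitary {k : ℕ} {S : Type v}
    (F : (Fin (k + 1) → ℕ → S) → Set ((Fin (k + 1) → ℕ → S) ⊕ Res k S))
    (Ω : Set (Fin (k + 1) → ℕ → S)) (u : (Fin (k + 1) → ℕ → S) → Finset (Fin (k + 1)))
    (rk : (Fin (k + 1) → ℕ → S) → Ordinal.{w})
    (hrk : ∀ η ν, Sum.inl ν ∈ F η → rk ν < rk η)
    (hfin : ∀ η, (F η).Finite) (hΩ : Ω.Countable) (hu : ∀ η ∈ Ω, (u η).Nonempty) :
    Good F Ω u := by
  classical
  obtain ⟨f, hf⟩ := Set.countable_iff_exists_injOn.1 hΩ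
  obtain ⟨r0, hr0⟩ := exists_wo (Fin (k + 1) → ℕ → S)
  have hpre : ∀ η, {ν | Sum.inl ν ∈ F η}.Finite := fun η =>
    (hfin η).preimage Sum.inl_injective.injOn
  have wf : WellFounded (fun ν η => Sum.inl ν ∈ F η) :=
    Subrelation.wf (fun {a b} h => hrk b a h) (InvImage.wf rk (wellFounded_lt))
  obtain ⟨h, hh1, hh2⟩ : ∃ h : (Fin (k + 1) → ℕ → S) → ℕ, (∀ η, f η ≤ h η) ∧
      ∀ η ν, Sum.inl ν ∈ F η → h ν < h η := by
    let h : (Fin (k + 1) → ℕ → S) → ℕ := wf.fix (fun η ih =>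
      max (f η) ((hpre η).toFinset.attach.sup (fun ν => ih ν.1 ((hpre η).mem_toFinset.1 ν.2) + 1)))
    have hh : ∀ η, h η = max (f η) ((hpre η).toFinset.attach.sup (fun ν => h ν.1 + 1)) := by
      intro η
      simp only [h]
      rw [wf.fix_eq]
    refine ⟨h, fun η => ?_, fun η ν hν => ?_⟩
    · rw [hh η]
      exact le_max_left _ _
    · rw [hh η]
      refine lt_of_lt_of_le ?_ (le_max_right _ _)
      have hm : ν ∈ (hpre η).toFinset := by simpa using hν
      have := Finset.le_sup (f := fun ν : {x // x ∈ (hpre η).toFinset} => h ν.1 + 1)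
        (Finset.mem_attach _ ⟨ν, hm⟩)
      exact lt_of_lt_of_le (Nat.lt_succ_self _) this
  let r := comb (fun η => (h η : Ordinal.{0})) (fun _ => r0)
  have hr : IsWellOrder _ r := comb_wo _ _ (fun _ => hr0)
  have hle : ∀ ν η, r ν η → h ν ≤ h η := by
    rintro ν η (h1 | ⟨h1, _⟩)
    · exact le_of_lt (Nat.cast_lt.1 h1)
    · exact le_of_eq (Nat.cast_injective (R := Ordinal.{0}) h1)
  refine ⟨r, hr, ?_, ?_⟩
  · intro η _ ν _ hν
    exact Or.inl (Nat.cast_lt.2 (hh2 η ν hν))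
  · intro η hη
    obtain ⟨l, hl⟩ := hu η hη
    refine ⟨l, hl, ?_⟩
    let X : Set (Fin (k + 1) → ℕ → S) := {ν | ν ∈ Ω ∧ h ν ≤ h η}
    have hX : X.Finite := by
      refine Set.Finite.of_finite_image (f := f) ?_ (hf.mono fun x hx => hx.1)
      refine (Set.finite_Iic (h η)).subset ?_
      rintro _ ⟨x, hx, rfl⟩
      exact (hh1 x).trans hx.2
    obtain ⟨N, hN⟩ := restrictAt_ne_finite (η := η) l (X \ {η}) (hX.subset Set.sdiff_subset) (by simp)
    have hY : {n | ∃ ν ∈ X, Sum.inr (restrictAt η l n) ∈ F ν}.Finite := by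
      have : (⋃ ν ∈ X, F ν).Finite := hX.biUnion (fun ν _ => hfin ν)
      refine (this.preimage (f := fun n => Sum.inr (restrictAt η l n)) ?_).subset ?_
      · exact (Sum.inr_injective.comp (restrictAt_inj_n η l)).injOn
      · rintro n ⟨ν, hν, hn⟩
        simp only [Set.mem_preimage, Set.mem_iUnion]
        exact ⟨ν, hν, hn⟩
    obtain ⟨n, hn1, hn2⟩ := ((Set.Ici_infinite N).sdiff hY).nonempty
    refine ⟨n, fun ν hν => ⟨fun hr' => ?_, fun hr' hF => ?_⟩⟩
    · refine hN n hn1 ν ⟨⟨hν, hle _ _ hr'⟩, ?_⟩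
      rintro rfl
      exact irrefl_of r _ hr'
    · refine hn2 ⟨ν, ⟨hν, ?_⟩, hF⟩
      rcases hr' with hr' | rfl
      · exact hle _ _ hr'
      · exact le_rfl

theorem good_simple {k : ℕ} {S : Type v}
    (F : (Fin (k + 1) → ℕ → S) → Set ((Fin (k + 1) → ℕ → S) ⊕ Res k S))
    (Ω : Set (Fin (k + 1) → ℕ → S)) (u : (Fin (k + 1) → ℕ → S) → Finset (Fin (k + 1)))
    (ord : S → Ordinal.{w}) (tt : (Fin (k + 1) → ℕ → S) → Ordinal.{w})
    (hsimple : ∀ η ∈ Ω, ∀ ν ∈ Ω, η (Fin.last k) 0 = ν (Fin.last k) 0 → F η = F ν ∧ tt η = tt ν)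
    (hreg : ∀ η ∈ Ω, tt η < ⨆ i, ord (η (Fin.last k) i))
    (hfull : ∀ η ∈ Ω, ∀ ν ∈ Ω, Sum.inl ν ∈ F η → ⨆ i, ord (ν (Fin.last k) i) ≤ tt η)
    (hres : ∀ η ∈ Ω, ∀ ν ∈ Ω, ∀ l n, Sum.inr (restrictAt ν l n) ∈ F η →
      ∀ i < n, ord (ν (Fin.last k) i) ≤ tt η)
    (hΩ : Ω.Countable) (hu : ∀ η ∈ Ω, (u η).Nonempty) :
    Good F Ω u := by
  classical
  obtain ⟨f, hf⟩ := Set.countable_iff_exists_injOn.1 hΩ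
  obtain ⟨r0, hr0⟩ := exists_wo (Fin (k + 1) → ℕ → S)
  let cls : (Fin (k + 1) → ℕ → S) → S := fun η => η (Fin.last k) 0
  let sp : (Fin (k + 1) → ℕ → S) → Ordinal.{w} := fun η => ⨆ i, ord (η (Fin.last k) i)
  let s : S → Ordinal.{w} := fun c => sInf {o | ∃ η ∈ Ω, cls η = c ∧ sp η = o}
  let t : S → Ordinal.{w} := fun c => sSup {o | ∃ η ∈ Ω, cls η = c ∧ tt η = o}
  have hs : ∀ η ∈ Ω, s (cls η) ≤ sp η := fun η hη => csInf_le' ⟨η, hη, rfl, rfl⟩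
  have ht : ∀ η ∈ Ω, t (cls η) = tt η := by
    intro η hη
    have : {o | ∃ η' ∈ Ω, cls η' = cls η ∧ tt η' = o} = {tt η} := by
      ext o
      constructor
      · rintro ⟨η', h1, h2, rfl⟩
        exact (hsimple η' h1 η hη h2).2
      · rintro rfl
        exact ⟨η, hη, rfl, rfl⟩
    simp only [t, this, csSup_singleton]
  obtain ⟨r1, hr1, hr1a, hr1b⟩ := interval (cls '' Ω) (hΩ.image _) s t (by
    rintro _ ⟨η, hη, rfl⟩
    have hne : {o | ∃ η' ∈ Ω, cls η' = cls η ∧ sp η' = o}.Nonempty := ⟨_, η, hη, rfl, rfl⟩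
    obtain ⟨η', h1, h2, h3⟩ := csInf_mem hne
    change t (cls η) < sInf _
    rw [← h3, ← h2, ht η' h1]
    exact hreg η' h1)
  let r2 := comb (fun η => (f η : Ordinal.{0})) (fun _ => r0)
  have hr2 : IsWellOrder _ r2 := comb_wo _ _ (fun _ => hr0)
  let r := comb (fun η => Ordinal.typein r1 (cls η)) (fun _ => r2)
  have hr : IsWellOrder _ r := comb_wo _ _ (fun _ => hr2)
  have hrc : ∀ ν η, r ν η → r1 (cls ν) (cls η) ∨ (cls ν = cls η ∧ f ν ≤ f η) := by
    rintro ν η (h | ⟨h, h2⟩)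
    · exact Or.inl ((Ordinal.typein_lt_typein r1).1 h)
    · refine Or.inr ⟨(Ordinal.typein_inj r1).1 h, ?_⟩
      rcases h2 with h2 | ⟨h2, _⟩
      · exact le_of_lt (Nat.cast_lt.1 h2)
      · exact le_of_eq (Nat.cast_injective (R := Ordinal.{0}) h2)
  refine ⟨r, hr, ?_, ?_⟩
  · intro η hη ν hν hF
    refine Or.inl ((Ordinal.typein_lt_typein r1).2 ?_)
    refine hr1a _ ⟨ν, hν, rfl⟩ _ ⟨η, hη, rfl⟩ ?_
    rw [ht η hη]
    exact (hs ν hν).trans (hfull η hη ν hν hF)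
  · intro η hη
    obtain ⟨l, hl⟩ := hu η hη
    refine ⟨l, hl, ?_⟩
    obtain ⟨τ, hτ, hτ2⟩ := hr1b _ ⟨η, hη, rfl⟩
    have hlt : max τ (tt η) < ⨆ i, ord (η (Fin.last k) i) :=
      max_lt (hτ.trans_le (hs η hη)) (hreg η hη)
    obtain ⟨i, hi⟩ := exists_lt_of_lt_ciSup hlt
    have hX : {ν | ν ∈ Ω ∧ f ν ≤ f η}.Finite := by
      refine Set.Finite.of_finite_image (f := f) ?_ (hf.mono fun x hx => hx.1)
      refine (Set.finite_Iic (f η)).subset ?_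
      rintro _ ⟨x, hx, rfl⟩
      exact hx.2
    obtain ⟨N, hN⟩ := restrictAt_ne_finite (η := η) l ({ν | ν ∈ Ω ∧ f ν ≤ f η} \ {η})
      (hX.subset Set.sdiff_subset) (by simp)
    refine ⟨max N (i + 1), fun ν hν => ⟨fun hr' => ?_, fun hr' hF => ?_⟩⟩
    · have hne : ν ≠ η := by
        rintro rfl
        exact irrefl_of r _ hr'
      rcases hrc _ _ hr' with h | ⟨_, h⟩
      · intro he
        obtain ⟨h1, h2⟩ := restrictAt_eq he
        have : cls η = cls ν := by
          by_cases hlk : Fin.last k = l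
          · have := h1 0 (lt_of_lt_of_le (Nat.succ_pos i) (le_max_right _ _))
            rw [← hlk] at this
            exact this
          · exact congrFun (h2 _ hlk) 0
        rw [this] at h
        exact irrefl_of r1 _ h
      · exact hN _ (le_max_left _ _) ν ⟨⟨hν, h⟩, hne⟩
    · have h1 := hres ν hν η hη l _ hF i (lt_of_lt_of_le (Nat.lt_succ_self i) (le_max_right _ _))
      have h2 : tt ν ≤ max τ (tt η) := by
        have h3 : r1 (cls ν) (cls η) ∨ cls ν = cls η := by
          rcases hr' with hr' | rfl
          · exact (hrc _ _ hr').imp id And.left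
          · exact Or.inr rfl
        rcases h3 with h3 | h3
        · rw [← ht ν hν]
          exact (hτ2 _ ⟨ν, hν, rfl⟩ h3).trans (le_max_left _ _)
        · rw [(hsimple ν hν η hη h3).2]
          exact le_max_right _ _
      exact absurd (h1.trans h2) (not_le.2 hi)

/-- the infinite components of a tuple -/
def comps {k : ℕ} {S : Type v} : (Fin (k + 1) → ℕ → S) ⊕ Res k S → Set (ℕ → S)
  | Sum.inl ν => Set.range ν
  | Sum.inr ρ => Set.range (fun p : {l // l ≠ ρ.m} => ρ.rest p.1 p.2)

theorem comps_countable {k : ℕ} {S : Type v} (w : (Fin (k + 1) → ℕ → S) ⊕ Res k S) :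
    (comps w).Countable := by
  rcases w with ν | ρ
  · exact Set.countable_range _
  · exact Set.countable_range _

/-- closure step -/
def clStep {k : ℕ} {S : Type v}
    (F : (Fin (k + 1) → ℕ → S) → Set ((Fin (k + 1) → ℕ → S) ⊕ Res k S))
    (C : Set (ℕ → S)) : Set (ℕ → S) :=
  C ∪ ⋃ η ∈ {η : Fin (k + 1) → ℕ → S | ∀ m, η m ∈ C}, ⋃ w ∈ F η, comps w

theorem mk_tuples_le {k : ℕ} {S : Type v} (C : Set (ℕ → S)) (κ : Cardinal.{v}) (hκ : ℵ₀ ≤ κ)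
    (hC : #C ≤ κ) : #{η : Fin (k + 1) → ℕ → S | ∀ m, η m ∈ C} ≤ κ := by
  let φ : {η : Fin (k + 1) → ℕ → S | ∀ m, η m ∈ C} → (Fin (k + 1) → C) :=
    fun η m => ⟨η.1 m, η.2 m⟩
  have hφ : Function.Injective φ := by
    intro a b h
    apply Subtype.ext
    funext m
    exact congrArg Subtype.val (congrFun h m)
  refine (Cardinal.mk_le_of_injective hφ).trans ?_
  have : #(Fin (k + 1) → C) = #C ^ (k + 1) := by
    simp only [Cardinal.mk_pi, Cardinal.prod_const, Cardinal.mk_fin, Cardinal.lift_natCast,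
      Cardinal.lift_id', Cardinal.power_natCast]
  rw [this]
  calc #C ^ (k + 1) ≤ κ ^ (k + 1) := by gcongr
    _ ≤ κ := by
      have := Cardinal.power_nat_le (c := κ) (n := k + 1) hκ
      exact_mod_cast this

theorem mk_clStep {k : ℕ} {S : Type v}
    (F : (Fin (k + 1) → ℕ → S) → Set ((Fin (k + 1) → ℕ → S) ⊕ Res k S))
    (hc : ∀ η, (F η).Countable) (C : Set (ℕ → S)) (κ : Cardinal.{v}) (hκ : ℵ₀ ≤ κ)
    (hC : #C ≤ κ) : #(clStep F C) ≤ κ := by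
  refine (Cardinal.mk_union_le _ _).trans (Cardinal.add_le_of_le hκ hC ?_)
  refine (Cardinal.mk_biUnion_le _ _).trans ?_
  refine Cardinal.mul_le_of_le hκ (mk_tuples_le C κ hκ hC) ?_
  refine ciSup_le' (fun η => ?_)
  refine le_trans ?_ hκ
  rw [Cardinal.le_aleph0_iff_set_countable]
  exact (hc _).biUnion (fun w _ => comps_countable w)

theorem cl_exists {k : ℕ} {S : Type v}
    (F : (Fin (k + 1) → ℕ → S) → Set ((Fin (k + 1) → ℕ → S) ⊕ Res k S))
    (hc : ∀ η, (F η).Countable) (κ : Cardinal.{v}) (hκ : ℵ₀ ≤ κ) :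
    ∃ cl : Set (ℕ → S) → Set (ℕ → S), (∀ C, C ⊆ cl C) ∧ Monotone cl ∧
      (∀ C, ∀ η : Fin (k + 1) → ℕ → S, (∀ m, η m ∈ cl C) → ∀ w ∈ F η, comps w ⊆ cl C) ∧
      (∀ C : Set (ℕ → S), #C ≤ κ → #(cl C) ≤ κ) := by
  have hmono : Monotone (clStep F) := by
    intro C D h
    refine Set.union_subset_union h ?_
    refine Set.biUnion_subset_biUnion_left ?_
    intro η hη m
    exact h (hη m)
  have hinc : ∀ C, Monotone (fun n => (clStep F)^[n] C) := by
    intro C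
    refine monotone_nat_of_le_succ (fun n => ?_)
    rw [Function.iterate_succ_apply']
    exact Set.subset_union_left
  refine ⟨fun C => ⋃ n, (clStep F)^[n] C, ?_, ?_, ?_, ?_⟩
  · intro C
    exact Set.subset_iUnion (fun n => (clStep F)^[n] C) 0
  · intro C D h
    exact Set.iUnion_mono (fun n => hmono.iterate n h)
  · intro C η hη w hw x hx
    have : ∀ m, ∃ n, η m ∈ (clStep F)^[n] C := fun m => by simpa using hη m
    choose N hN using this
    have hM : ∀ m, η m ∈ (clStep F)^[Finset.univ.sup N] C := fun m =>
      hinc C (Finset.le_sup (Finset.mem_univ m)) (hN m)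
    refine Set.mem_iUnion.2 ⟨Finset.univ.sup N + 1, ?_⟩
    rw [Function.iterate_succ_apply']
    refine Or.inr ?_
    simp only [Set.mem_iUnion]
    exact ⟨η, hM, w, hw, hx⟩
  · intro C hC
    have hn : ∀ n, #((clStep F)^[n] C : Set (ℕ → S)) ≤ κ := by
      intro n
      induction n with
      | zero => exact hC
      | succ n ih =>
        rw [Function.iterate_succ_apply']
        exact mk_clStep F hc _ κ hκ ih
    have h := Cardinal.mk_iUnion_le_lift.{v, 0} (fun n : ℕ => ((clStep F)^[n] C : Set (ℕ → S)))
    simp only [Cardinal.mk_nat, Cardinal.lift_aleph0, Cardinal.lift_id'] at h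
    refine le_trans ?_ (Cardinal.mul_le_of_le hκ hκ (ciSup_le' hn))
    simpa using h

theorem good_all {k : ℕ} {S : Type v}
    (F : (Fin (k + 1) → ℕ → S) → Set ((Fin (k + 1) → ℕ → S) ⊕ Res k S))
    (hc : ∀ η, (F η).Countable) (Λ : Set (Fin (k + 1) → ℕ → S))
    (hbase : ∀ Ω u, Ω ⊆ Λ → Ω.Countable → (∀ η ∈ Ω, (u η).Nonempty) → Good F Ω u) (f : ℕ) :
    ∀ Ω u, Ω ⊆ Λ → #Ω ≤ Cardinal.aleph (f : Ordinal.{v}) → (∀ η ∈ Ω, f + 1 ≤ (u η).card) →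
      Good F Ω u := by
  classical
  induction f with
  | zero =>
    intro Ω u hΩ hcard hu
    refine hbase Ω u hΩ ?_ (fun η hη => Finset.card_pos.1 (by have := hu η hη; omega))
    rw [← Cardinal.le_aleph0_iff_set_countable]
    simpa using hcard
  | succ f ih =>
    intro Ω u hΩ hcard hu
    set κ := Cardinal.aleph (f : Ordinal.{v}) with hκdef
    have hκ : ℵ₀ ≤ κ := Cardinal.aleph0_le_aleph _
    obtain ⟨cl, hcl1, hcl2, hcl3, hcl4⟩ := cl_exists F hc κ hκ
    obtain ⟨q, hq, hqo⟩ := Cardinal.exists_ord_eq Ω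
    let gg : Ω → Ordinal.{v} := fun x => Ordinal.typein q x
    let C : Ordinal.{v} → Set (ℕ → S) := fun a =>
      cl {x | ∃ η : Ω, gg η ≤ a ∧ ∃ m, x = η.1 m}
    have hCmono : Monotone C := by
      intro a b hab
      refine hcl2 ?_
      rintro x ⟨η, h1, h2⟩
      exact ⟨η, h1.trans hab, h2⟩
    have hCcard : ∀ (η : Ω) (a : Ordinal.{v}), a ≤ gg η → #(C a) ≤ κ := by
      intro η a ha
      refine hcl4 _ ?_
      have h1 : #{η' : Ω | q η' η} ≤ κ := by
        have := Cardinal.card_typein_lt (r := q) η hqo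
        rw [Ordinal.card_typein] at this
        refine Order.lt_succ_iff.1 (lt_of_lt_of_le this ?_)
        rw [hκdef, Cardinal.succ_aleph]
        exact_mod_cast hcard
      have h2 : #{η' : Ω | gg η' ≤ a} ≤ κ := by
        have hsub : {η' : Ω | gg η' ≤ a} ⊆ {η' : Ω | q η' η} ∪ {η} := by
          intro η' h'
          rcases lt_or_eq_of_le (le_trans (show gg η' ≤ a from h') ha) with h | h
          · exact Or.inl ((Ordinal.typein_lt_typein q).1 h)
          · exact Or.inr ((Ordinal.typein_inj q).1 h)
        refine (Cardinal.mk_le_mk_of_subset hsub).trans ((Cardinal.mk_union_le _ _).trans ?_)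
        refine Cardinal.add_le_of_le hκ h1 ?_
        rw [Cardinal.mk_singleton]
        exact Cardinal.one_le_aleph0.trans hκ
      have h3 : {x | ∃ η : Ω, gg η ≤ a ∧ ∃ m, x = η.1 m} =
          ⋃ η' ∈ {η' : Ω | gg η' ≤ a}, Set.range η'.1 := by
        ext x
        simp [eq_comm]
      rw [h3]
      refine (Cardinal.mk_biUnion_le _ _).trans ?_
      refine Cardinal.mul_le_of_le hκ h2 (ciSup_le' fun x => ?_)
      refine le_trans ?_ hκ
      rw [Cardinal.le_aleph0_iff_set_countable]
      exact Set.countable_range _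
    let key : (Fin (k + 1) → ℕ → S) → Ordinal.{v} := fun η => sInf {a | ∀ m, η m ∈ C a}
    have hne : ∀ η : Ω, gg η ∈ {a | ∀ m, η.1 m ∈ C a} := by
      intro η m
      exact hcl1 _ ⟨η, le_rfl, m, rfl⟩
    have hkey : ∀ η ∈ Ω, ∀ m, η m ∈ C (key η) := by
      intro η hη
      exact csInf_mem (⟨_, hne ⟨η, hη⟩⟩ : {a | ∀ m, η m ∈ C a}.Nonempty)
    have hkmin : ∀ η a, (∀ m, η m ∈ C a) → key η ≤ a := fun η a h => csInf_le' h
    let bad : (Fin (k + 1) → ℕ → S) → Fin (k + 1) → Prop := fun η l =>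
      ∃ a < key η, ∀ m, m ≠ l → η m ∈ C a
    have hbad : ∀ η l l', bad η l → bad η l' → l = l' := by
      rintro η l l' ⟨a, ha, h1⟩ ⟨b, hb, h2⟩
      by_contra hll
      refine absurd (hkmin η (max a b) fun m => ?_) (not_le.2 (max_lt ha hb))
      by_cases hm : m = l
      · exact hCmono (le_max_right a b) (h2 m (by rw [hm]; exact hll))
      · exact hCmono (le_max_left a b) (h1 m hm)
    let u' : (Fin (k + 1) → ℕ → S) → Finset (Fin (k + 1)) := fun η =>
      (u η).filter (fun l => ¬ bad η l)
    have hu' : ∀ η ∈ Ω, f + 1 ≤ (u' η).card := by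
      intro η hη
      have h1 := hu η hη
      have h2 := Finset.card_filter_add_card_filter_not (s := u η) (bad η)
      have h3 : ((u η).filter (bad η)).card ≤ 1 := by
        rw [Finset.card_le_one]
        intro a ha b hb
        exact hbad η a b (Finset.mem_filter.1 ha).2 (Finset.mem_filter.1 hb).2
      simp only [u']
      omega
    have hlayer : ∀ a, Good F {η | η ∈ Ω ∧ key η = a} u' := by
      intro a
      refine ih _ u' (fun η h => hΩ h.1) ?_ (fun η h => hu' η h.1)
      by_cases hemp : ∃ η, η ∈ Ω ∧ key η = a
      · obtain ⟨η, hη, ha⟩ := hemp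
        have h1 : #(C a) ≤ κ := by
          refine hCcard ⟨η, hη⟩ a ?_
          rw [← ha]
          exact hkmin η _ (hne ⟨η, hη⟩)
        refine (Cardinal.mk_le_mk_of_subset ?_).trans (mk_tuples_le (k := k) (C a) κ hκ h1)
        rintro η' ⟨h2, rfl⟩
        exact hkey η' h2
      · have : {η | η ∈ Ω ∧ key η = a} = ∅ := by
          ext η
          simp only [Set.mem_ofPred_eq, Set.mem_empty_iff_false, iff_false]
          exact fun h => hemp ⟨η, h⟩
        rw [this]
        simp
    choose R hRwo hR1 hR2 using hlayer
    refine ⟨comb key R, comb_wo _ _ hRwo, ?_, ?_⟩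
    · intro η hη ν hν hF
      have h1 := hcl3 _ η (hkey η hη) _ hF
      have h2 : key ν ≤ key η := hkmin ν _ (fun m => h1 ⟨m, rfl⟩)
      rcases lt_or_eq_of_le h2 with h | h
      · exact Or.inl h
      · exact Or.inr ⟨h, hR1 _ η ⟨hη, h.symm⟩ ν ⟨hν, rfl⟩ hF⟩
    · intro η hη
      obtain ⟨l, hl, n, hn⟩ := hR2 _ η ⟨hη, rfl⟩
      have hlb := (Finset.mem_filter.1 hl).2
      refine ⟨l, (Finset.mem_filter.1 hl).1, n, fun ν hν => ⟨?_, ?_⟩⟩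
      · rintro (h | ⟨h, h2⟩)
        · intro he
          have h3 := (restrictAt_eq he).2
          refine hlb ⟨key ν, h, fun m hm => ?_⟩
          rw [h3 m hm]
          exact hkey ν hν m
        · rw [h] at h2
          exact (hn ν ⟨hν, h⟩).1 h2
      · intro hr hF
        have hcase : key ν < key η ∨ (key ν = key η ∧ (R (key η) ν η ∨ ν = η)) := by
          rcases hr with (h | ⟨h, h2⟩) | rfl
          · exact Or.inl h
          · rw [h] at h2
            exact Or.inr ⟨h, Or.inl h2⟩
          · exact Or.inr ⟨rfl, Or.inr rfl⟩
        rcases hcase with h | ⟨h, h2⟩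
        · have h1 := hcl3 _ ν (hkey ν hν) _ hF
          exact hlb ⟨key ν, h, fun m hm => h1 ⟨⟨m, hm⟩, rfl⟩⟩
        · exact (hn ν ⟨hν, h⟩).2 h2 hF

theorem final_order {k : ℕ} {S : Type v}
    (F : (Fin (k + 1) → ℕ → S) → Set ((Fin (k + 1) → ℕ → S) ⊕ Res k S))
    (Ω : Set (Fin (k + 1) → ℕ → S))
    (r : (Fin (k + 1) → ℕ → S) → (Fin (k + 1) → ℕ → S) → Prop)
    (hr : IsWellOrder (Fin (k + 1) → ℕ → S) r)
    (hF : ∀ η ∈ Ω, ∀ ν ∈ Ω, Sum.inl ν ∈ F η → r ν η) :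
    ∃ R : (Fin (k + 1) → ℕ → S) ⊕ Res k S → (Fin (k + 1) → ℕ → S) ⊕ Res k S → Prop,
      IsWellOrder _ R ∧ (∀ η ∈ Ω, ∀ w ∈ F η, R w (Sum.inl η)) ∧
      (∀ η ∈ Ω, ∀ ν ∈ Ω, R (Sum.inl ν) (Sum.inl η) → r ν η) ∧
      (∀ η ∈ Ω, ∀ ρ, R (Sum.inr ρ) (Sum.inl η) → (∃ ν ∈ Ω, Sum.inr ρ ∈ F ν) →
        ∃ ν ∈ Ω, Sum.inr ρ ∈ F ν ∧ (r ν η ∨ ν = η)) := by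
  classical
  obtain ⟨r0, hr0⟩ := exists_wo ((Fin (k + 1) → ℕ → S) ⊕ Res k S)
  let Z : (Fin (k + 1) → ℕ → S) ⊕ Res k S → Set Ordinal.{v} := fun w =>
    {x | ∃ η ∈ Ω, Ordinal.typein r η = x ∧ (w = Sum.inl η ∨ w ∈ F η)}
  let g : (Fin (k + 1) → ℕ → S) ⊕ Res k S → Ordinal.{v} := fun w => sInf (Z w)
  let bit : (Fin (k + 1) → ℕ → S) ⊕ Res k S → Ordinal.{0} := fun w =>
    if ∃ η ∈ Ω, w = Sum.inl η then 1 else 0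
  let R := comb g (fun _ => comb bit (fun _ => r0))
  have hR : IsWellOrder _ R := comb_wo _ _ (fun _ => comb_wo _ _ (fun _ => hr0))
  have hg : ∀ η ∈ Ω, g (Sum.inl η) = Ordinal.typein r η := by
    intro η hη
    have hmem : Ordinal.typein r η ∈ Z (Sum.inl η) := ⟨η, hη, rfl, Or.inl rfl⟩
    refine le_antisymm (csInf_le' hmem) (le_csInf ⟨_, hmem⟩ ?_)
    rintro x ⟨ν, hν, rfl, h | h⟩
    · rw [Sum.inl.inj h]
    · exact ((Ordinal.typein_lt_typein r).2 (hF ν hν η hη h)).le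
  have hRle : ∀ w w', R w w' → g w ≤ g w' := by
    rintro w w' (h | ⟨h, _⟩)
    · exact h.le
    · exact h.le
  have hle : ∀ η ν, Ordinal.typein r ν ≤ Ordinal.typein r η → r ν η ∨ ν = η := by
    intro η ν h
    rcases lt_or_eq_of_le h with h | h
    · exact Or.inl ((Ordinal.typein_lt_typein r).1 h)
    · exact Or.inr ((Ordinal.typein_inj r).1 h)
  refine ⟨R, hR, ?_, ?_, ?_⟩
  · intro η hη w hw
    have h1 : g w ≤ g (Sum.inl η) := by
      rw [hg η hη]
      exact csInf_le' ⟨η, hη, rfl, Or.inr hw⟩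
    rcases lt_or_eq_of_le h1 with h | h
    · exact Or.inl h
    · refine Or.inr ⟨h, Or.inl ?_⟩
      have hb1 : bit (Sum.inl η) = 1 := if_pos ⟨η, hη, rfl⟩
      have hb0 : bit w = 0 := by
        refine if_neg ?_
        rintro ⟨ν, hν, rfl⟩
        rw [hg η hη, hg ν hν] at h
        have := (Ordinal.typein_inj r).1 h
        subst this
        exact irrefl_of r _ (hF ν hν ν hν hw)
      rw [hb0, hb1]
      exact zero_lt_one
  · intro η hη ν hν h
    have h1 := hRle _ _ h
    rw [hg η hη, hg ν hν] at h1
    rcases hle _ _ h1 with h2 | rfl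
    · exact h2
    · exact absurd h (irrefl_of R _)
  · rintro η hη ρ h ⟨ν, hν, hρ⟩
    have hne : (Z (Sum.inr ρ)).Nonempty := ⟨_, ν, hν, rfl, Or.inr hρ⟩
    obtain ⟨ν', hν', h1, h2⟩ := csInf_mem hne
    have h3 := hRle _ _ h
    rw [hg η hη] at h3
    refine ⟨ν', hν', ?_, hle _ _ (h1.le.trans h3)⟩
    rcases h2 with h2 | h2
    · cases h2
    · exact h2

end Sh883Aux

open Sh883 in
/-- Let `x = (Sset, Λ)` be a combinatorial `k`-parameter with `Sset` a
set of ordinals, and let `F` be a regressive function on `x` which is finitary or simple.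
Then `(x, F)` is `ℵ_{k+1}`-free: every `Λ' ⊆ Λ` of cardinality less than `ℵ_{k+1}` is
free for `(x, F)`. -/
theorem stmt15 (k : ℕ) (Sset : Set Ordinal.{u}) (Λ : Set (Fin (k + 1) → ℕ → ↥Sset))
    (F : ↥Λ → Set (FullOrRes k Sset)) (hreg : Regressive Λ F)
    (hfs : Finitary F ∨ Simple F)
    (Λ' : Set (Fin (k + 1) → ℕ → ↥Sset)) (hsub : Λ' ⊆ Λ)
    (hcard : #Λ' < Cardinal.aleph (k + 1)) :
    FreeFor Λ F Λ' := by
  classical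
  obtain ⟨hcount, _, hlt⟩ := hreg
  let F' : (Fin (k + 1) → ℕ → Sset) → Set (FullOrRes k Sset) :=
    fun η => {w | ∃ h : η ∈ Λ, w ∈ F ⟨η, h⟩}
  have hF' : ∀ η (h : η ∈ Λ), F' η = F ⟨η, h⟩ := by
    intro η h
    ext w
    exact ⟨fun ⟨_, hw⟩ => hw, fun hw => ⟨h, hw⟩⟩
  have hF0 : ∀ η, η ∉ Λ → F' η = ∅ := by
    intro η h
    ext w
    exact ⟨fun ⟨h', _⟩ => absurd h' h, fun hw => absurd hw (Set.notMem_empty w)⟩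
  have hc : ∀ η, (F' η).Countable := by
    intro η
    by_cases h : η ∈ Λ
    · rw [hF' η h]
      exact hcount _
    · rw [hF0 η h]
      exact Set.countable_empty
  let tt : (Fin (k + 1) → ℕ → Sset) → Ordinal.{u} :=
    fun η => sSup (⋃ w ∈ F' η, coordVals w (Fin.last k))
  have htt : ∀ η ∈ Λ, tt η < ⨆ i : ℕ, ((η (Fin.last k) i : Ordinal.{u})) := by
    intro η h
    simp only [tt, hF' η h]
    exact hlt ⟨η, h⟩ _
  have hbdd : ∀ η, BddAbove (⋃ w ∈ F' η, coordVals w (Fin.last k)) := by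
    intro η
    have : (⋃ w ∈ F' η, coordVals w (Fin.last k)).Countable := by
      refine (hc η).biUnion (fun w _ => ?_)
      rcases w with ν | ρ
      · exact Set.countable_range _
      · simp only [coordVals]
        split_ifs with h
        · refine Set.Countable.mono ?_ ((ρ.seq.finite_toSet.image Subtype.val).countable)
          rintro o ⟨s, hs, rfl⟩
          exact ⟨s, hs, rfl⟩
        · exact Set.countable_range _
    have := this.to_subtype
    exact Ordinal.bddAbove_of_small
  have hmem : ∀ η, ∀ w ∈ F' η, ∀ o ∈ coordVals w (Fin.last k), o ≤ tt η := by
    intro η w hw o ho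
    exact le_csSup (hbdd η) (Set.mem_biUnion hw ho)
  have hfull : ∀ η ν, Sum.inl ν ∈ F' η →
      ⨆ i : ℕ, ((ν (Fin.last k) i : Ordinal.{u})) ≤ tt η := by
    intro η ν h
    exact ciSup_le' (fun i => hmem η _ h _ ⟨i, rfl⟩)
  have hres : ∀ η ν l n, Sum.inr (restrictAt ν l n) ∈ F' η →
      ∀ i < n, ((ν (Fin.last k) i : Ordinal.{u})) ≤ tt η := by
    intro η ν l n h i hi
    refine hmem η _ h _ ?_
    by_cases hl : Fin.last k = l
    · subst hl
      have he : coordVals (Sum.inr (restrictAt ν (Fin.last k) n) : FullOrRes k Sset) (Fin.last k) =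
          {o : Ordinal | ∃ s ∈ (restrictAt ν (Fin.last k) n).seq, (s : Ordinal) = o} := dif_pos rfl
      rw [he]
      refine ⟨ν (Fin.last k) i, ?_, rfl⟩
      simp only [restrictAt]
      rw [List.mem_ofFn]
      exact ⟨⟨i, hi⟩, rfl⟩
    · have he : coordVals (Sum.inr (restrictAt ν l n) : FullOrRes k Sset) (Fin.last k) =
          Set.range fun i : ℕ => (ν (Fin.last k) i : Ordinal) := dif_neg hl
      rw [he]
      exact ⟨i, rfl⟩
  have hbase : ∀ Ω u, Ω ⊆ Λ → Ω.Countable → (∀ η ∈ Ω, (u η).Nonempty) →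
      Sh883Aux.Good F' Ω u := by
    intro Ω u hΩ hcΩ hu
    rcases hfs with hfin | hsim
    · refine Sh883Aux.good_finitary F' Ω u
        (fun η => ⨆ i : ℕ, ((η (Fin.last k) i : Ordinal.{u}))) ?_ ?_ hcΩ hu
      · intro η ν hν
        have hη : η ∈ Λ := hν.1
        exact (hfull η ν hν).trans_lt (htt η hη)
      · intro η
        by_cases h : η ∈ Λ
        · rw [hF' η h]
          exact hfin _
        · rw [hF0 η h]
          exact Set.finite_empty
    · refine Sh883Aux.good_simple F' Ω u (fun s => (s : Ordinal.{u})) tt ?_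
        (fun η hη => htt η (hΩ hη)) (fun η _ ν _ => hfull η ν) (fun η _ ν _ => hres η ν) hcΩ hu
      intro η hη ν hν h
      have : F' η = F' ν := by
        rw [hF' η (hΩ hη), hF' ν (hΩ hν)]
        exact hsim ⟨η, hΩ hη⟩ ⟨ν, hΩ hν⟩ h
      exact ⟨this, by simp only [tt, this]⟩
  have hcard' : #Λ' ≤ Cardinal.aleph (k : Ordinal.{u + 1}) := by
    rw [← Order.lt_succ_iff, Cardinal.succ_aleph]
    exact hcard
  obtain ⟨r, hr, hr1, hr2⟩ := Sh883Aux.good_all F' hc Λ hbase k Λ' (fun _ => Finset.univ) hsub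
    hcard' (fun _ _ => by simp)
  obtain ⟨R, hR, hRa, hRb, hRc⟩ := Sh883Aux.final_order F' Λ' r hr hr1
  let U : Set (FullOrRes k Sset) :=
    Sum.inl '' Λ' ∪ ⋃ (η : ↥Λ) (_ : (η : Fin (k + 1) → ℕ → ↥Sset) ∈ Λ'), F η
  have hUF : ∀ η : ↥Λ, η.1 ∈ Λ' → F η ⊆ U := by
    intro η hη w hw
    refine Or.inr ?_
    simp only [Set.mem_iUnion]
    exact ⟨η, hη, hw⟩
  let q : U → U → Prop := fun a b => R a.1 b.1
  have hq : IsWellOrder U q := by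
    refine { wf := InvImage.wf Subtype.val hR.wf, trichotomous := ?_ }
    intro a b h1 h2
    exact Subtype.ext (hR.trichotomous a.1 b.1 h1 h2)
  choose! l hl n hn using hr2
  let en := Ordinal.enum q
  have hlt' : ∀ a b : Set.Iio (Ordinal.type q), (a : Ordinal) < (b : Ordinal) ↔
      R (en a).1 (en b).1 := by
    intro a b
    exact (en.map_rel_iff (a := a) (b := b)).symm
  refine ⟨Ordinal.type q, fun a => (en a).1, fun a => Sum.elim l (fun _ => 0) (en a).1,
    Subtype.val_injective.comp en.injective, ?_, ?_, ?_⟩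
  · ext w
    constructor
    · rintro ⟨a, rfl⟩
      exact (en a).2
    · intro hw
      exact ⟨en.symm ⟨w, hw⟩, by simp⟩
  · intro a η he hη w hw
    replace he : (en a).1 = Sum.inl η.1 := he
    have hw' : w ∈ U := hUF η hη hw
    refine ⟨en.symm ⟨w, hw'⟩, ?_, Or.inl (by simp)⟩
    rw [hlt', he]
    simp only [RelIso.apply_symm_apply]
    exact hRa η hη w ⟨η.2, hw⟩
  · intro a η he hη
    replace he : (en a).1 = Sum.inl η.1 := he
    have hLa : Sum.elim l (fun _ => 0) (en a).1 = l η.1 := by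
      rw [he]
      rfl
    simp only [hLa]
    refine ⟨n η.1, fun b hb => ⟨?_, ?_⟩⟩
    · intro hb2
      rw [hlt', he, hb2] at hb
      have hbU := (en b).2
      rw [hb2] at hbU
      have hex : ∃ ν ∈ Λ', Sum.inr (restrictAt η.1 (l η.1) (n η.1)) ∈ F' ν := by
        rcases hbU with ⟨_, _, h⟩ | h
        · cases h
        · simp only [Set.mem_iUnion] at h
          obtain ⟨ν, hν, h⟩ := h
          exact ⟨ν, hν, ν.2, h⟩
      obtain ⟨ν, hν, h1, h2⟩ := hRc η hη _ hb hex
      exact (hn η.1 hη ν hν).2 h2 h1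
    · intro ν hb2 hν
      rw [hlt', he, hb2] at hb
      exact (hn η.1 hη ν hν).1 (hRb η hη ν hν hb)
end
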